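/- For every permutation σ of {1,…,n} the following are equivalent: (a) ij ∈ E if and only if σ(i)σ(j) ∈ E; M_{σ(i)σ(j)} = M_{ij} for all i, j ∈ {1,…,n}; ‖v_{σ(i)}‖ = ‖v_i‖ for all i; and ⟨v_{σ(i)}, v_{σ(j)}⟩ = ⟨v_i, v_j⟩ for all ij ∈ E; (b) there exists an orthogonal symmetry T of P with T v_i = v_{σ(i)} for all i ∈ {1,…,n}. (The product of the Izmestiev coloring and the metric coloring captures the orthogonal symmetries of P.) -/

import Mathlib

open MeasureTheory
open scoped RealInnerProductSpace

/-!
The heart of the proof is that the kernel of the Izmestiev matrix `M` consists exactly of the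
vectors `(⟪v i, w⟫)` with `w` in the ambient space.

*Determination of the kernel* (dimension at least two). Let `vol c` be the volume of the polar
body with right-hand sides `c`. Its partial derivatives are the (normalized) facet volumes `G j`,
which are differentiable at `c = 1` because no three vertices of `P` are collinear
(`IsFacetVolume.hasFDerivAt`, `IsFacetVolume.differentiableAt`). If `x` is in the kernel, then the
`G j` do not change to first order along `1 + ε x`; by homogeneity neither does the volume, and
hence `vol (1 + ε x) = vol 1 + o(ε²)` (`IsFacetVolume.abs_pvol_sub_le`). On the other hand, slicing
orthogonally to `v i` and transporting the slice volumes of one polytope monotonically onto those of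
the other proves the Brunn–Minkowski inequality
`vol ((c + c') / 2) ≥ √(vol c * vol c')` with a gain factor `1 + q² / (8 K²)`, where `q` is the
displacement of the `i`-th facet relative to the displacement of the barycentre
(`Slicing.pvol_gain`). For `c = 1` and `c' = 1 + ε x` this forces `q = o(ε)`: every `x i` is the
limit of the values at `v i` of the difference quotients of the barycentre, so `x` lies in the
closed set of vectors `(⟪v i, w⟫)` (`IsFacetVolume.exists_translation`).

*From the kernel to the symmetry.* If `σ` preserves `M`, then for every `e` the vector
`(⟪v (σ i), e⟫)` is again in the kernel, so `v i ↦ v (σ i)` extends to a linear map `T`. Since `T`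
preserves the inner products of `v i` with itself and with its neighbours, and these span the space
(`IsVertexList.eq_zero_of_inner_adj`, a simplex-method argument), `T* T v i = v i` for all `i`, so
`T` is orthogonal (`IsVertexList.exists_isometry`). Dimensions zero and one are treated directly.
The converse implication only uses the invariance of Lebesgue measure under isometries.
-/

/-! ### Monotone transport between densities on intervals -/

section

open MeasureTheory Set Filter Topology

/-- `A` is a density on the bounded interval `(a₀, a₁)`: continuous, positive and integrable
there. Its values outside the interval play no role. -/
structure IsDensity (A : ℝ → ℝ) (a₀ a₁ : ℝ) : Prop where
  lt : a₀ < a₁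
  cont : ContinuousOn A (Ioo a₀ a₁)
  pos : ∀ s ∈ Ioo a₀ a₁, 0 < A s
  int : IntegrableOn A (Ioo a₀ a₁)

namespace IsDensity

variable {A : ℝ → ℝ} {a₀ a₁ : ℝ}

lemma intervalIntegrable (h : IsDensity A a₀ a₁) : IntervalIntegrable A volume a₀ a₁ := by
  rw [intervalIntegrable_iff_integrableOn_Ioo_of_le h.lt.le]
  exact h.int

lemma continuousOn_cdf (h : IsDensity A a₀ a₁) :
    ContinuousOn (fun s => ∫ t in a₀..s, A t) (Icc a₀ a₁) := by
  have := intervalIntegral.continuousOn_primitive_interval (μ := volume) (f := A) (a := a₀)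
    (b := a₁) (by rw [uIcc_of_le h.lt.le, integrableOn_Icc_iff_integrableOn_Ioo]; exact h.int)
  rwa [uIcc_of_le h.lt.le] at this

lemma hasDerivAt_cdf (h : IsDensity A a₀ a₁) {s : ℝ} (hs : s ∈ Ioo a₀ a₁) :
    HasDerivAt (fun s => ∫ t in a₀..s, A t) (A s) s := by
  apply intervalIntegral.integral_hasDerivAt_right
  · exact h.intervalIntegrable.mono_set (by
      rw [uIcc_of_le hs.1.le, uIcc_of_le h.lt.le]; exact Icc_subset_Icc_right hs.2.le)
  · exact h.cont.stronglyMeasurableAtFilter isOpen_Ioo s hs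
  · exact h.cont.continuousAt (isOpen_Ioo.mem_nhds hs)

lemma strictMonoOn_cdf (h : IsDensity A a₀ a₁) :
    StrictMonoOn (fun s => ∫ t in a₀..s, A t) (Icc a₀ a₁) := by
  apply strictMonoOn_of_deriv_pos (convex_Icc _ _) h.continuousOn_cdf
  intro s hs
  rw [interior_Icc] at hs
  rw [(h.hasDerivAt_cdf hs).deriv]
  exact h.pos s hs

lemma integral_pos (h : IsDensity A a₀ a₁) : 0 < ∫ t in a₀..a₁, A t := by
  have := h.strictMonoOn_cdf (left_mem_Icc.2 h.lt.le) (right_mem_Icc.2 h.lt.le) h.lt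
  simpa using this

/-- Monotone rearrangement of one density onto another: a map `R` matching the normalised
cumulative distribution functions. -/
lemma exists_transport {B : ℝ → ℝ} {b₀ b₁ : ℝ} (hA : IsDensity A a₀ a₁)
    (hB : IsDensity B b₀ b₁) :
    ∃ R : ℝ → ℝ, ContinuousOn R (Icc a₀ a₁) ∧ R a₁ = b₁ ∧ R '' Ioo a₀ a₁ = Ioo b₀ b₁ ∧
      StrictMonoOn R (Icc a₀ a₁) ∧
      ∀ s ∈ Ioo a₀ a₁,
        (∫ t in b₀..R s, B t) =
          (∫ t in b₀..b₁, B t) / (∫ t in a₀..a₁, A t) * ∫ t in a₀..s, A t ∧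
        HasDerivAt R ((∫ t in b₀..b₁, B t) / (∫ t in a₀..a₁, A t) * A s / B (R s)) s := by
  set F := fun s => ∫ t in a₀..s, A t with hF
  set G := fun s => ∫ t in b₀..s, B t with hG
  have hF1 : 0 < F a₁ := hA.integral_pos
  have hG1 : 0 < G b₁ := hB.integral_pos
  have hF0 : F a₀ = 0 := by simp [hF]
  have hG0 : G b₀ = 0 := by simp [hG]
  set ω := G b₁ / F a₁ with hω
  have hωpos : 0 < ω := div_pos hG1 hF1
  have hal : a₀ ∈ Icc a₀ a₁ := left_mem_Icc.2 hA.lt.le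
  have har : a₁ ∈ Icc a₀ a₁ := right_mem_Icc.2 hA.lt.le
  have hbl : b₀ ∈ Icc b₀ b₁ := left_mem_Icc.2 hB.lt.le
  have hbr : b₁ ∈ Icc b₀ b₁ := right_mem_Icc.2 hB.lt.le
  have key : ∀ s, ∃ r, s ∈ Icc a₀ a₁ → r ∈ Icc b₀ b₁ ∧ G r = ω * F s := by
    intro s
    by_cases hs : s ∈ Icc a₀ a₁
    · have h1 : 0 ≤ F s := hF0 ▸ hA.strictMonoOn_cdf.monotoneOn hal hs hs.1
      have h2 : F s ≤ F a₁ := hA.strictMonoOn_cdf.monotoneOn hs har hs.2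
      have h3 : ω * F s ∈ Icc (G b₀) (G b₁) := by
        rw [hG0]
        refine ⟨by positivity, ?_⟩
        rw [hω, div_mul_eq_mul_div, div_le_iff₀ hF1]
        exact mul_le_mul_of_nonneg_left h2 hG1.le
      obtain ⟨r, hr, hr'⟩ := intermediate_value_Icc hB.lt.le hB.continuousOn_cdf h3
      exact ⟨r, fun _ => ⟨hr, hr'⟩⟩
    · exact ⟨0, fun h => absurd h hs⟩
  choose R hR using key
  have hmono : StrictMonoOn R (Icc a₀ a₁) := by
    intro s hs t ht hst
    have : G (R s) < G (R t) := by
      rw [(hR s hs).2, (hR t ht).2]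
      exact mul_lt_mul_of_pos_left (hA.strictMonoOn_cdf hs ht hst) hωpos
    exact (hB.strictMonoOn_cdf.lt_iff_lt (hR s hs).1 (hR t ht).1).1 this
  have himg : R '' Icc a₀ a₁ = Icc b₀ b₁ := by
    apply Subset.antisymm
    · rintro _ ⟨s, hs, rfl⟩
      exact (hR s hs).1
    · intro r hr
      have h1 : 0 ≤ G r := hG0 ▸ hB.strictMonoOn_cdf.monotoneOn hbl hr hr.1
      have h2 : G r ≤ G b₁ := hB.strictMonoOn_cdf.monotoneOn hr hbr hr.2
      have h3 : G r / ω ∈ Icc (F a₀) (F a₁) := by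
        rw [hF0]
        refine ⟨by positivity, ?_⟩
        rw [div_le_iff₀ hωpos, hω, mul_div_cancel₀ _ hF1.ne']
        exact h2
      obtain ⟨s, hs, hs'⟩ := intermediate_value_Icc hA.lt.le hA.continuousOn_cdf h3
      refine ⟨s, hs, hB.strictMonoOn_cdf.injOn (hR s hs).1 hr ?_⟩
      change G (R s) = G r
      rw [(hR s hs).2]
      have : F s = G r / ω := hs'
      rw [this, mul_div_cancel₀ _ hωpos.ne']
  have hR1 : R a₁ = b₁ := by
    apply le_antisymm (hR a₁ har).1.2
    obtain ⟨s, hs, hs'⟩ : b₁ ∈ R '' Icc a₀ a₁ := himg ▸ hbr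
    rw [← hs']
    exact hmono.monotoneOn hs har hs.2
  have hR0 : R a₀ = b₀ := by
    apply le_antisymm _ (hR a₀ hal).1.1
    obtain ⟨s, hs, hs'⟩ : b₀ ∈ R '' Icc a₀ a₁ := himg ▸ hbl
    rw [← hs']
    exact hmono.monotoneOn hal hs hs.1
  have hcont : ContinuousOn R (Icc a₀ a₁) := by
    rw [continuousOn_iff_continuous_domRestrict]
    have : OrdConnected (R '' Icc a₀ a₁) := himg ▸ ordConnected_Icc
    exact continuous_subtype_val.comp (hmono.orderIso R (Icc a₀ a₁)).continuous
  have hmem : ∀ s ∈ Ioo a₀ a₁, R s ∈ Ioo b₀ b₁ := fun s hs =>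
    ⟨hR0 ▸ hmono hal (Ioo_subset_Icc_self hs) hs.1, hR1 ▸ hmono (Ioo_subset_Icc_self hs) har hs.2⟩
  refine ⟨R, hcont, hR1, ?_, hmono, fun s hs => ⟨(hR s (Ioo_subset_Icc_self hs)).2, ?_⟩⟩
  · apply Subset.antisymm
    · rintro _ ⟨s, hs, rfl⟩
      exact hmem s hs
    · intro r hr
      obtain ⟨s, hs, rfl⟩ : r ∈ R '' Icc a₀ a₁ := himg ▸ Ioo_subset_Icc_self hr
      refine ⟨s, ⟨lt_of_le_of_ne hs.1 ?_, lt_of_le_of_ne hs.2 ?_⟩, rfl⟩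
      · rintro rfl; exact hr.1.ne' hR0
      · rintro rfl; exact hr.2.ne hR1
  · have hBpos := hB.pos _ (hmem s hs)
    have hApos := hA.pos s hs
    have hRc : ContinuousAt R s := (hcont.mono Ioo_subset_Icc_self).continuousAt
      (isOpen_Ioo.mem_nhds hs)
    -- `G ∘ R = ω F` near `s`, so the difference quotient of `R` is the quotient of those of
    -- `ω F` (at `s`) and of `G` (at `R s`).
    have hGd := hB.hasDerivAt_cdf (hmem s hs)
    have hFd : HasDerivAt (fun t => ω * F t) (ω * A s) s := (hA.hasDerivAt_cdf hs).const_mul ω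
    have hFd' : HasDerivAt (G ∘ R) (ω * A s) s := by
      apply hFd.congr_of_eventuallyEq
      filter_upwards [isOpen_Ioo.mem_nhds hs] with t ht
      exact (hR t (Ioo_subset_Icc_self ht)).2
    rw [hasDerivAt_iff_tendsto_slope] at hFd' hGd ⊢
    have hRt : Tendsto R (𝓝[≠] s) (𝓝[≠] (R s)) := by
      apply tendsto_nhdsWithin_of_tendsto_nhds_of_eventually_within
      · exact hRc.tendsto.mono_left nhdsWithin_le_nhds
      · have : ∀ᶠ t in 𝓝[≠] s, t ∈ Ioo a₀ a₁ := nhdsWithin_le_nhds (isOpen_Ioo.mem_nhds hs)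
        filter_upwards [this, self_mem_nhdsWithin] with t ht hts
        exact fun h => hts (hmono.injOn (Ioo_subset_Icc_self ht) (Ioo_subset_Icc_self hs) h)
    have h2 := hFd'.div (hGd.comp hRt) hBpos.ne'
    refine h2.congr' ?_
    have hG2 : ∀ᶠ t in 𝓝[≠] s, t ∈ Ioo a₀ a₁ := nhdsWithin_le_nhds (isOpen_Ioo.mem_nhds hs)
    filter_upwards [hG2, self_mem_nhdsWithin] with t ht hts
    have hts' : t ≠ s := hts
    have h3 : R t ≠ R s := fun h => hts
      (hmono.injOn (Ioo_subset_Icc_self ht) (Ioo_subset_Icc_self hs) h)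
    have h4 : G (R t) ≠ G (R s) := fun h => h3
      (hB.strictMonoOn_cdf.injOn (hR t (Ioo_subset_Icc_self ht)).1
        (hR s (Ioo_subset_Icc_self hs)).1 h)
    have h5 : R t - R s ≠ 0 := sub_ne_zero.2 h3
    have h6 : G (R t) - G (R s) ≠ 0 := sub_ne_zero.2 h4
    have h7 : t - s ≠ 0 := sub_ne_zero.2 hts'
    simp only [Pi.div_apply, Function.comp_apply, slope_def_field]
    change (G (R t) - G (R s)) / (t - s) / ((G (R t) - G (R s)) / (R t - R s)) = _
    field_simp

end IsDensity

end

/-! ### A quantitative Prékopa–Leindler inequality on the line -/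

section

open MeasureTheory Set Filter Topology

namespace IsDensity

variable {A B C : ℝ → ℝ} {a₀ a₁ b₀ b₁ : ℝ}

/-- The arithmetic-geometric mean inequality for the Jacobian `(1 + ρ) / 2` of the midpoint map. -/
lemma amgm_jacobian {x y c ω ρ : ℝ} (hx : 0 < x) (hy : 0 < y) (hρ : 0 < ρ)
    (h : ρ * y = ω * x) (hc : 0 ≤ c) (hxy : x * y ≤ c ^ 2) :
    √ω * x * ((1 + ρ) / (2 * √ρ)) ≤ c * ((1 + ρ) / 2) := by
  have hω : ω = ρ * y / x := by field_simp; linarith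
  have h1 : √ω * x = √ρ * √(x * y) := by
    have hx' : x = √(x ^ 2) := (Real.sqrt_sq hx.le).symm
    have : √ω * √(x ^ 2) = √ρ * √(x * y) := by
      rw [← Real.sqrt_mul' _ (by positivity), ← Real.sqrt_mul hρ.le, hω]
      congr 1
      field_simp
    rwa [← hx'] at this
  have h2 : √(x * y) ≤ c := Real.sqrt_le_iff.2 ⟨hc, hxy⟩
  have h3 : 0 < √ρ := Real.sqrt_pos.2 hρ
  rw [h1]
  have : √ρ * √(x * y) * ((1 + ρ) / (2 * √ρ)) = √(x * y) * ((1 + ρ) / 2) := by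
    field_simp
  rw [this]
  exact mul_le_mul_of_nonneg_right h2 (by positivity)

lemma one_le_amgm {ρ : ℝ} (hρ : 0 < ρ) : 1 ≤ (1 + ρ) / (2 * √ρ) := by
  have h3 : 0 < √ρ := Real.sqrt_pos.2 hρ
  rw [le_div_iff₀ (by positivity)]
  nlinarith [Real.sq_sqrt hρ.le, sq_nonneg (√ρ - 1)]

/-- Quantitative arithmetic-geometric mean inequality. The last step replaces the square
`(ρ u - u) ^ 2` by its tangent line at `l`, which can be integrated exactly. -/
lemma amgm_gain {ρ u K l : ℝ} (hρ : 0 < ρ) (hu : 0 ≤ u) (hK : 0 < K) (huK : u ≤ K)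
    (hwK : ρ * u ≤ K) :
    1 + (2 * l * (ρ * u - u) - l ^ 2) / (8 * K ^ 2) ≤ (1 + ρ) / (2 * √ρ) := by
  obtain ⟨t, ht, rfl⟩ : ∃ t : ℝ, 0 < t ∧ ρ = t ^ 2 :=
    ⟨√ρ, Real.sqrt_pos.2 hρ, (Real.sq_sqrt hρ.le).symm⟩
  rw [Real.sqrt_sq ht.le]
  have h1 : u ^ 2 * (t * (t + 1) ^ 2) ≤ 4 * K ^ 2 := by
    rcases le_total t 1 with h | h
    · have : t * (t + 1) ^ 2 ≤ 4 := by nlinarith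
      have : u ^ 2 * (t * (t + 1) ^ 2) ≤ u ^ 2 * 4 := by gcongr
      nlinarith
    · have h4 : t * (t + 1) ^ 2 ≤ 4 * (t ^ 2) ^ 2 := by
        have : (t + 1) ^ 2 ≤ 4 * t ^ 2 := by nlinarith
        have h5 : t * (t + 1) ^ 2 ≤ t * (4 * t ^ 2) := by gcongr
        have h6 : t * (4 * t ^ 2) ≤ t * (t * (4 * t ^ 2)) := by
          have : 0 ≤ t * (4 * t ^ 2) := by positivity
          nlinarith
        nlinarith
      have : u ^ 2 * (t * (t + 1) ^ 2) ≤ u ^ 2 * (4 * (t ^ 2) ^ 2) := by gcongr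
      have h7 : (t ^ 2 * u) ^ 2 ≤ K ^ 2 := by gcongr
      nlinarith
  have h2 : (t ^ 2 * u - u) ^ 2 ≤ 8 * K ^ 2 * ((1 + t ^ 2) / (2 * t) - 1) := by
    have : 8 * K ^ 2 * ((1 + t ^ 2) / (2 * t) - 1) = 4 * K ^ 2 * ((t - 1) ^ 2 / t) := by
      field_simp; ring
    rw [this, mul_div_assoc', le_div_iff₀ ht]
    have : (t ^ 2 * u - u) ^ 2 * t = u ^ 2 * (t * (t + 1) ^ 2) * (t - 1) ^ 2 := by ring
    rw [this]
    gcongr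
  have h3 : (2 * l * (t ^ 2 * u - u) - l ^ 2) ≤ 8 * K ^ 2 * ((1 + t ^ 2) / (2 * t) - 1) := by
    nlinarith [sq_nonneg (t ^ 2 * u - u - l)]
  have : (2 * l * (t ^ 2 * u - u) - l ^ 2) / (8 * K ^ 2) ≤ (1 + t ^ 2) / (2 * t) - 1 := by
    rw [div_le_iff₀ (by positivity)]
    linarith
  linarith

/-- Change of variables along the midpoint map `s ↦ (s + R s) / 2`. -/
lemma integral_midpoint_le {R R' : ℝ → ℝ} (hC0 : ∀ z, 0 ≤ C z) (hC : Integrable C)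
    (hmono : StrictMonoOn R (Ioo a₀ a₁)) (hR : ∀ s ∈ Ioo a₀ a₁, HasDerivAt R (R' s) s)
    (hR0 : ∀ s ∈ Ioo a₀ a₁, 0 ≤ R' s) :
    IntegrableOn (fun s => C ((s + R s) / 2) * ((1 + R' s) / 2)) (Ioo a₀ a₁) ∧
      ∫ s in Ioo a₀ a₁, C ((s + R s) / 2) * ((1 + R' s) / 2) ≤ ∫ z, C z := by
  have hd : ∀ s ∈ Ioo a₀ a₁, HasDerivWithinAt (fun s => (s + R s) / 2) ((1 + R' s) / 2)
      (Ioo a₀ a₁) s := fun s hs =>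
    (((hasDerivAt_id s).add (hR s hs)).div_const 2).hasDerivWithinAt
  have hinj : InjOn (fun s => (s + R s) / 2) (Ioo a₀ a₁) := by
    apply StrictMonoOn.injOn
    intro s hs t ht hst
    have := hmono hs ht hst
    change (s + R s) / 2 < (t + R t) / 2
    linarith
  have h1 := integrableOn_image_iff_integrableOn_abs_deriv_smul measurableSet_Ioo hd hinj C
  have h2 := integral_image_eq_integral_abs_deriv_smul measurableSet_Ioo hd hinj C
  have hcongr : ∀ s ∈ Ioo a₀ a₁, |(1 + R' s) / 2| • C ((s + R s) / 2) =
      C ((s + R s) / 2) * ((1 + R' s) / 2) := by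
    intro s hs
    have := hR0 s hs
    rw [abs_of_nonneg (by positivity), smul_eq_mul, mul_comm]
  constructor
  · exact (integrableOn_congr_fun hcongr measurableSet_Ioo).1 (h1.1 hC.integrableOn)
  · rw [← setIntegral_congr_fun measurableSet_Ioo hcongr, ← h2]
    exact setIntegral_le_integral hC (Eventually.of_forall hC0)

/-- One-dimensional Prékopa–Leindler inequality for densities on intervals. -/
lemma prekopa (hA : IsDensity A a₀ a₁) (hB : IsDensity B b₀ b₁) (hC0 : ∀ z, 0 ≤ C z)
    (hC : Integrable C)
    (hmid : ∀ s ∈ Ioo a₀ a₁, ∀ r ∈ Ioo b₀ b₁, A s * B r ≤ C ((s + r) / 2) ^ 2) :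
    (∫ s in a₀..a₁, A s) * (∫ r in b₀..b₁, B r) ≤ (∫ z, C z) ^ 2 := by
  obtain ⟨R, -, -, himg, hmono, hR⟩ := hA.exists_transport hB
  have hIA := hA.integral_pos
  have hIB := hB.integral_pos
  set IA := ∫ s in a₀..a₁, A s with hIAdef
  set IB := ∫ s in b₀..b₁, B s
  have hmem : ∀ s ∈ Ioo a₀ a₁, R s ∈ Ioo b₀ b₁ := fun s hs => himg ▸ mem_image_of_mem R hs
  have hpos : ∀ s ∈ Ioo a₀ a₁, 0 < IB / IA * A s / B (R s) := fun s hs => by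
    have := hA.pos s hs
    have := hB.pos _ (hmem s hs)
    positivity
  obtain ⟨hint, hle⟩ := integral_midpoint_le hC0 hC (hmono.mono Ioo_subset_Icc_self)
    (fun s hs => (hR s hs).2) (fun s hs => (hpos s hs).le)
  have hpt : ∀ s ∈ Ioo a₀ a₁, √(IB / IA) * A s ≤
      C ((s + R s) / 2) * ((1 + IB / IA * A s / B (R s)) / 2) := by
    intro s hs
    have hAs := hA.pos s hs
    have hBs := hB.pos _ (hmem s hs)
    refine le_trans ?_ (amgm_jacobian (ω := IB / IA) hAs hBs (hpos s hs) ?_ (hC0 _)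
      (hmid s hs _ (hmem s hs)))
    · exact le_mul_of_one_le_right (by positivity) (one_le_amgm (hpos s hs))
    · field_simp
  have h1 := setIntegral_mono_on (hA.int.const_mul _) hint measurableSet_Ioo hpt
  have h2 : ∫ s in Ioo a₀ a₁, √(IB / IA) * A s = √(IB / IA) * IA := by
    rw [integral_const_mul, hIAdef, intervalIntegral.integral_of_le hA.lt.le,
      integral_Ioc_eq_integral_Ioo]
  rw [h2] at h1
  have h3 : √(IB / IA) * IA ≤ ∫ z, C z := h1.trans hle
  calc IA * IB = (√(IB / IA) * IA) ^ 2 := by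
        rw [mul_pow, Real.sq_sqrt (by positivity)]; field_simp
    _ ≤ _ := by gcongr

/-- One-dimensional Prékopa–Leindler inequality with a gain: the deficit controls how far the
displacement `b₁ - a₁` of the right end points is from the displacement of the barycentres.
The hypotheses `hAK`, `hBK` bound the ratio of distribution function to density. -/
lemma prekopa_gain (hA : IsDensity A a₀ a₁) (hB : IsDensity B b₀ b₁) (hC0 : ∀ z, 0 ≤ C z)
    (hC : Integrable C)
    (hmid : ∀ s ∈ Ioo a₀ a₁, ∀ r ∈ Ioo b₀ b₁, A s * B r ≤ C ((s + r) / 2) ^ 2)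
    {K : ℝ} (hK : 0 < K)
    (hAK : ∀ s ∈ Ioo a₀ a₁, ∫ t in a₀..s, A t ≤ K * A s)
    (hBK : ∀ r ∈ Ioo b₀ b₁, ∫ t in b₀..r, B t ≤ K * B r) :
    √((∫ s in a₀..a₁, A s) * (∫ r in b₀..b₁, B r)) *
      (1 + ((b₁ - a₁) - ((∫ r in b₀..b₁, r * B r) / (∫ r in b₀..b₁, B r) -
        (∫ s in a₀..a₁, s * A s) / (∫ s in a₀..a₁, A s))) ^ 2 / (8 * K ^ 2)) ≤ ∫ z, C z := by
  obtain ⟨R, hRc, hR1, himg, hmono, hR⟩ := hA.exists_transport hB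
  have hIA := hA.integral_pos
  have hIB := hB.integral_pos
  set IA := ∫ s in a₀..a₁, A s with hIAdef
  set IB := ∫ s in b₀..b₁, B s with hIBdef
  set ω := IB / IA with hω
  have hωpos : 0 < ω := div_pos hIB hIA
  set l := (b₁ - a₁) - ((∫ r in b₀..b₁, r * B r) / IB - (∫ s in a₀..a₁, s * A s) / IA) with hl
  set F := fun s => ∫ t in a₀..s, A t with hF
  set R' := fun s => ω * A s / B (R s) with hR'
  have hmem : ∀ s ∈ Ioo a₀ a₁, R s ∈ Ioo b₀ b₁ := fun s hs => himg ▸ mem_image_of_mem R hs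
  have hpos : ∀ s ∈ Ioo a₀ a₁, 0 < R' s := fun s hs => by
    have := hA.pos s hs
    have := hB.pos _ (hmem s hs)
    simp only [hR']
    positivity
  obtain ⟨hint, hle⟩ := integral_midpoint_le hC0 hC (hmono.mono Ioo_subset_Icc_self)
    (fun s hs => (hR s hs).2) (fun s hs => (hpos s hs).le)
  have hF0 : ∀ s ∈ Ioo a₀ a₁, 0 ≤ F s := by
    intro s hs
    have := hA.strictMonoOn_cdf.monotoneOn (left_mem_Icc.2 hA.lt.le) (Ioo_subset_Icc_self hs)
      hs.1.le
    simpa using this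
  have hFR : ∀ s ∈ Ioo a₀ a₁, F s * R' s ≤ K * A s := by
    intro s hs
    have hAs := hA.pos s hs
    have hBs := hB.pos _ (hmem s hs)
    have h1 := hBK _ (hmem s hs)
    rw [(hR s hs).1] at h1
    change ω * F s ≤ _ at h1
    have : F s * R' s = (ω * F s) * (A s / B (R s)) := by simp only [hR']; ring
    rw [this]
    calc (ω * F s) * (A s / B (R s)) ≤ K * B (R s) * (A s / B (R s)) := by gcongr
      _ = K * A s := by field_simp
  have hpt : ∀ s ∈ Ioo a₀ a₁,
      √ω * (A s + (2 * l * (F s * R' s - F s) - l ^ 2 * A s) / (8 * K ^ 2)) ≤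
      C ((s + R s) / 2) * ((1 + R' s) / 2) := by
    intro s hs
    have hAs := hA.pos s hs
    have hBs := hB.pos _ (hmem s hs)
    refine le_trans ?_ (amgm_jacobian (ω := ω) hAs hBs (hpos s hs) ?_ (hC0 _)
      (hmid s hs _ (hmem s hs)))
    · have := amgm_gain (u := F s / A s) (l := l) (hpos s hs)
        (div_nonneg (hF0 s hs) hAs.le) hK
        (by rw [div_le_iff₀ hAs]; exact hAK s hs)
        (by rw [mul_div_assoc', div_le_iff₀ hAs, mul_comm]; exact hFR s hs)
      have h2 : √ω * (A s + (2 * l * (F s * R' s - F s) - l ^ 2 * A s) / (8 * K ^ 2)) =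
          √ω * A s * (1 + (2 * l * (R' s * (F s / A s) - F s / A s) - l ^ 2) / (8 * K ^ 2)) := by
        field_simp
      rw [h2]
      gcongr
    · simp only [hR']; field_simp
  -- the weighted displacement is found by integrating the derivative of `F s * (R s - s)`
  have hFc : ContinuousOn F (Ioo a₀ a₁) := hA.continuousOn_cdf.mono Ioo_subset_Icc_self
  have hRc' := hRc.mono Ioo_subset_Icc_self
  have hBR : ContinuousOn (fun s => B (R s)) (Ioo a₀ a₁) := hB.cont.comp hRc' hmem
  have hFRint : IntegrableOn (fun s => F s * R' s) (Ioo a₀ a₁) := by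
    refine Integrable.mono' (hA.int.const_mul K) ?_ ?_
    · refine ContinuousOn.aestronglyMeasurable ?_ measurableSet_Ioo
      exact hFc.mul ((hA.cont.const_smul ω).div hBR fun s hs => (hB.pos _ (hmem s hs)).ne')
    · refine (ae_restrict_mem measurableSet_Ioo).mono fun s hs => ?_
      rw [Real.norm_of_nonneg (mul_nonneg (hF0 s hs) (hpos s hs).le)]
      exact hFR s hs
  have hFint : IntegrableOn F (Ioo a₀ a₁) :=
    (hA.continuousOn_cdf.integrableOn_Icc).mono_set Ioo_subset_Icc_self
  have hsA : IntegrableOn (fun s => s * A s) (Ioo a₀ a₁) := by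
    have := IntegrableOn.continuousOn_mul (K := Icc a₀ a₁) (g := fun s => s) (g' := A) (μ := volume)
      continuousOn_id (by rw [integrableOn_Icc_iff_integrableOn_Ioo]; exact hA.int) isCompact_Icc
    exact this.mono_set Ioo_subset_Icc_self
  have hRA : IntegrableOn (fun s => R s * A s) (Ioo a₀ a₁) := by
    have := IntegrableOn.continuousOn_mul (K := Icc a₀ a₁) (g := R) (g' := A) (μ := volume)
      hRc (by rw [integrableOn_Icc_iff_integrableOn_Ioo]; exact hA.int) isCompact_Icc
    exact this.mono_set Ioo_subset_Icc_self
  have hioo : ∀ f : ℝ → ℝ, ∫ s in a₀..a₁, f s = ∫ s in Ioo a₀ a₁, f s := fun f => by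
    rw [intervalIntegral.integral_of_le hA.lt.le, integral_Ioc_eq_integral_Ioo]
  have hioob : ∀ f : ℝ → ℝ, ∫ s in b₀..b₁, f s = ∫ s in Ioo b₀ b₁, f s := fun f => by
    rw [intervalIntegral.integral_of_le hB.lt.le, integral_Ioc_eq_integral_Ioo]
  have hparts : ∫ s in a₀..a₁, ((R s * A s - s * A s) + (F s * R' s - F s)) =
      IA * (b₁ - a₁) := by
    rw [intervalIntegral.integral_eq_sub_of_hasDerivAt_of_le hA.lt.le
      (f := fun s => F s * (R s - s))]
    · simp only [hF, hR1, intervalIntegral.integral_same, zero_mul, sub_zero, hIAdef]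
    · exact hA.continuousOn_cdf.mul (hRc.sub continuousOn_id)
    · intro s hs
      refine ((hA.hasDerivAt_cdf hs).mul ((hR s hs).2.sub (hasDerivAt_id s))).congr_deriv ?_
      change A s * (R s - s) + F s * (R' s - 1) = _
      ring
    · rw [intervalIntegrable_iff_integrableOn_Ioo_of_le hA.lt.le]
      exact (hRA.sub hsA).add (hFRint.sub hFint)
  have hbary : ∫ r in b₀..b₁, r * B r = ω * ∫ s in Ioo a₀ a₁, R s * A s := by
    rw [hioob, ← himg, integral_image_eq_integral_abs_deriv_smul measurableSet_Ioo
      (fun s hs => (hR s hs).2.hasDerivWithinAt) (hmono.mono Ioo_subset_Icc_self).injOn,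
      ← integral_const_mul]
    refine setIntegral_congr_fun measurableSet_Ioo fun s hs => ?_
    have hBs := hB.pos _ (hmem s hs)
    have := hpos s hs
    simp only [hR'] at this
    simp only [smul_eq_mul]
    rw [abs_of_pos this]
    field_simp
  have hi1 : IntegrableOn (fun s => R s * A s - s * A s) (Ioo a₀ a₁) := hRA.sub hsA
  have hi2 : IntegrableOn (fun s => F s * R' s - F s) (Ioo a₀ a₁) := hFRint.sub hFint
  have hl' : ∫ s in Ioo a₀ a₁, (F s * R' s - F s) = IA * l := by
    rw [hioo, integral_add hi1 hi2, integral_sub hRA hsA] at hparts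
    rw [hl, hbary, hioo (fun s => s * A s)]
    have : IA * (b₁ - a₁ - (ω * (∫ s in Ioo a₀ a₁, R s * A s) / IB -
        (∫ s in Ioo a₀ a₁, s * A s) / IA)) = IA * (b₁ - a₁) - ((∫ s in Ioo a₀ a₁, R s * A s) -
        (∫ s in Ioo a₀ a₁, s * A s)) := by
      rw [hω]; field_simp
    rw [this, ← hparts]
    ring
  have hg : IntegrableOn (fun s => (2 * l * (F s * R' s - F s) - l ^ 2 * A s) / (8 * K ^ 2))
      (Ioo a₀ a₁) :=
    ((hi2.const_mul (2 * l)).sub (hA.int.const_mul (l ^ 2))).div_const _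
  have h1 := setIntegral_mono_on ((hA.int.add hg).const_mul √ω) hint measurableSet_Ioo hpt
  have hsum : ∫ s in Ioo a₀ a₁,
      √ω * (A s + (2 * l * (F s * R' s - F s) - l ^ 2 * A s) / (8 * K ^ 2)) =
      √ω * IA * (1 + l ^ 2 / (8 * K ^ 2)) := by
    rw [integral_const_mul, integral_add hA.int hg, integral_div,
      integral_sub (hi2.const_mul (2 * l)) (hA.int.const_mul (l ^ 2)),
      integral_const_mul, integral_const_mul]
    rw [hl', ← hioo, ← hIAdef]
    ring
  have h4 : √(IA * IB) = √ω * IA := by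
    rw [Real.sqrt_eq_iff_mul_self_eq (by positivity) (by positivity), mul_mul_mul_comm,
      Real.mul_self_sqrt hωpos.le, hω]
    field_simp
  rw [h4, ← hsum]
  exact h1.trans hle

end IsDensity

end

/-! ### Volumes of polytopes as functions of the right-hand sides -/

section

open MeasureTheory Set Filter Topology Asymptotics
set_option linter.unusedSectionVars false

/-- A function on `ℝ^ι` with partial derivatives near `c₀` that are continuous at `c₀` is
differentiable at `c₀`. -/
lemma hasFDerivAt_of_partial {ι : Type*} [Fintype ι] [DecidableEq ι] {F : (ι → ℝ) → ℝ}
    {g : ι → (ι → ℝ) → ℝ} {c₀ : ι → ℝ}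
    (hF : ∀ i, ∀ᶠ c in 𝓝 c₀, HasDerivAt (fun t => F (Function.update c i t)) (g i c) (c i))
    (hg : ∀ i, ContinuousAt (g i) c₀) :
    HasFDerivAt F (∑ i, g i c₀ • (ContinuousLinearMap.proj i : (ι → ℝ) →L[ℝ] ℝ)) c₀ := by
  have key : ∀ S : Finset ι, (fun c : ι → ℝ => F (S.piecewise c c₀) - F c₀ -
      ∑ i ∈ S, g i c₀ * (c i - c₀ i)) =o[𝓝 c₀] fun c => c - c₀ := by
    intro S
    induction S using Finset.induction_on with
    | empty => simp
    | insert i S hi ih =>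
      have hstep : (fun c : ι → ℝ => F (Function.update (S.piecewise c c₀) i (c i)) -
          F (Function.update (S.piecewise c c₀) i (c₀ i)) - g i c₀ * (c i - c₀ i))
          =o[𝓝 c₀] fun c => c - c₀ := by
        rw [isLittleO_iff]
        intro ε hε
        have h1 := (hF i).and ((hg i).tendsto.eventually (Metric.ball_mem_nhds _ hε))
        obtain ⟨δ, hδ, hball⟩ := Metric.eventually_nhds_iff_ball.1 h1
        filter_upwards [Metric.ball_mem_nhds c₀ hδ] with c hc
        have hmem : ∀ τ ∈ Metric.ball (c₀ i) δ,
            Function.update (S.piecewise c c₀) i τ ∈ Metric.ball c₀ δ := by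
          intro τ hτ
          rw [Metric.mem_ball, dist_pi_lt_iff hδ] at hc ⊢
          intro j
          rcases eq_or_ne j i with rfl | hj
          · simpa using hτ
          · rw [Function.update_of_ne hj]
            by_cases hjS : j ∈ S
            · simpa [Finset.piecewise, hjS] using hc j
            · simpa [Finset.piecewise, hjS] using hδ
        have hci : c i ∈ Metric.ball (c₀ i) δ := by
          rw [Metric.mem_ball, dist_pi_lt_iff hδ] at hc
          exact hc i
        have hmv := (convex_ball (c₀ i) δ).norm_image_sub_le_of_norm_hasDerivWithin_le
          (f := fun τ => F (Function.update (S.piecewise c c₀) i τ) - g i c₀ * τ)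
          (f' := fun τ => g i (Function.update (S.piecewise c c₀) i τ) - g i c₀ * 1) (C := ε)
          (fun τ hτ => by
            have h2 := (hball _ (hmem τ hτ)).1
            simp only [Function.update_idem, Function.update_self] at h2
            exact (h2.sub ((hasDerivAt_id τ).const_mul (g i c₀))).hasDerivWithinAt)
          (fun τ hτ => by
            have h2 := (hball _ (hmem τ hτ)).2
            rw [dist_eq_norm] at h2
            simpa using h2.le)
          (Metric.mem_ball_self hδ) hci
        have h3 : ‖c i - c₀ i‖ ≤ ‖c - c₀‖ := norm_le_pi_norm (c - c₀) i
        calc _ = _ := by congr 1; ring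
          _ ≤ _ := hmv
          _ ≤ _ := by gcongr
      have hsum := hstep.add ih
      refine hsum.congr_left fun c => ?_
      have h1 : (insert i S).piecewise c c₀ = Function.update (S.piecewise c c₀) i (c i) := by
        rw [Finset.piecewise_insert]
      have h2 : Function.update (S.piecewise c c₀) i (c₀ i) = S.piecewise c c₀ := by
        rw [Function.update_eq_self_iff]; simp [hi]
      rw [Finset.sum_insert hi, h1, h2]
      ring
  have := key Finset.univ
  rw [hasFDerivAt_iff_isLittleO]
  refine this.congr_left fun c => ?_
  simp [Finset.piecewise_univ]

/-! ### Open polytopes -/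

variable {ι : Type*} {E : Type*} [NormedAddCommGroup E] [NormedSpace ℝ E]

/-- The open polytope `{x | ∀ j, a j x < c j}`. Zero normals `a j` are allowed. -/
def opoly (a : ι → E →L[ℝ] ℝ) (c : ι → ℝ) : Set E := {x | ∀ j, a j x < c j}

/-- The normals `a` positively span: the only common recession direction is `0`. -/
def PosSpan (a : ι → E →L[ℝ] ℝ) : Prop := ∀ x, (∀ j, a j x ≤ 0) → x = 0

lemma mem_opoly {a : ι → E →L[ℝ] ℝ} {c : ι → ℝ} {x : E} : x ∈ opoly a c ↔ ∀ j, a j x < c j :=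
  Iff.rfl

lemma isOpen_opoly [Finite ι] (a : ι → E →L[ℝ] ℝ) (c : ι → ℝ) : IsOpen (opoly a c) := by
  simp only [opoly, Set.ofPred_forall]
  exact isOpen_iInter_of_finite fun j => isOpen_lt (a j).continuous continuous_const

lemma convex_opoly (a : ι → E →L[ℝ] ℝ) (c : ι → ℝ) : Convex ℝ (opoly a c) := by
  simp only [opoly, Set.ofPred_forall]
  exact convex_iInter fun j => convex_halfSpace_lt (a j).isLinear _

lemma PosSpan.exists_bound [Fintype ι] [FiniteDimensional ℝ E] {a : ι → E →L[ℝ] ℝ}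
    (ha : PosSpan a) : ∃ K : ℝ, 0 < K ∧ ∀ (c : ι → ℝ) (x : E), (∀ j, a j x ≤ c j) →
      ‖x‖ ≤ K * ‖c‖ := by
  have hgc : Continuous fun x : E => ∑ j, max (a j x) 0 := by fun_prop
  obtain ⟨δ, hδ, hle⟩ : ∃ δ : ℝ, 0 < δ ∧ ∀ x : E, ‖x‖ = 1 → δ ≤ ∑ j, max (a j x) 0 := by
    rcases (Metric.sphere (0 : E) 1).eq_empty_or_nonempty with he | hne
    · refine ⟨1, one_pos, fun x hx => ?_⟩
      have : x ∈ Metric.sphere (0 : E) 1 := by simpa using hx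
      simp [he] at this
    · obtain ⟨x₀, hx₀, hmin⟩ := (isCompact_sphere (0 : E) 1).exists_isMinOn hne hgc.continuousOn
      refine ⟨_, ?_, fun x hx => hmin (by simpa using hx)⟩
      refine lt_of_le_of_ne (Finset.sum_nonneg fun j _ => le_max_right _ _) fun h => ?_
      have h1 := (Finset.sum_eq_zero_iff_of_nonneg fun j _ => le_max_right _ _).1 h.symm
      have h2 := ha x₀ fun j => by
        have := h1 j (Finset.mem_univ j)
        rw [← this]; exact le_max_left _ _
      simp [h2] at hx₀
  refine ⟨(Fintype.card ι + 1) / δ, by positivity, fun c x hx => ?_⟩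
  rcases eq_or_ne x 0 with rfl | hx0
  · simp; positivity
  have hn : 0 < ‖x‖ := norm_pos_iff.2 hx0
  have h1 := hle (‖x‖⁻¹ • x) (by rw [norm_smul, norm_inv, norm_norm, inv_mul_cancel₀ hn.ne'])
  have h2 : ∑ j, max (a j (‖x‖⁻¹ • x)) 0 ≤ ∑ _j : ι, ‖x‖⁻¹ * ‖c‖ := by
    refine Finset.sum_le_sum fun j _ => max_le ?_ (by positivity)
    rw [map_smul, smul_eq_mul]
    gcongr
    exact (hx j).trans ((le_abs_self _).trans (norm_le_pi_norm c j))
  rw [Finset.sum_const, Finset.card_univ, nsmul_eq_mul] at h2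
  have h3 := h1.trans h2
  have h4 : δ * ‖x‖ ≤ Fintype.card ι * ‖c‖ := by
    have := mul_le_mul_of_nonneg_right h3 hn.le
    calc δ * ‖x‖ ≤ _ := this
      _ = _ := by field_simp
  rw [div_mul_eq_mul_div, le_div_iff₀ hδ]
  nlinarith [norm_nonneg c]

/-- The volume of an open polytope. -/
noncomputable def pvol [MeasurableSpace E] (μ : Measure E) (a : ι → E →L[ℝ] ℝ) (c : ι → ℝ) : ℝ :=
  μ.real (opoly a c)

section Vol
variable [Fintype ι] [FiniteDimensional ℝ E] [MeasurableSpace E] [BorelSpace E]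
  {μ : Measure E} [μ.IsAddHaarMeasure] {a : ι → E →L[ℝ] ℝ}

lemma pvol_nonneg (c : ι → ℝ) : 0 ≤ pvol μ a c := measureReal_nonneg

lemma PosSpan.opoly_subset_closedBall (ha : PosSpan a) : ∃ K : ℝ, 0 < K ∧ ∀ c : ι → ℝ,
    opoly a c ⊆ Metric.closedBall 0 (K * ‖c‖) := by
  obtain ⟨K, hK, h⟩ := ha.exists_bound
  exact ⟨K, hK, fun c x hx => by simpa using h c x fun j => (hx j).le⟩

lemma PosSpan.measure_opoly_lt_top (ha : PosSpan a) (c : ι → ℝ) : μ (opoly a c) < ⊤ := by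
  obtain ⟨K, -, h⟩ := ha.opoly_subset_closedBall
  exact (measure_mono (h c)).trans_lt measure_closedBall_lt_top

lemma PosSpan.pvol_pos (ha : PosSpan a) {c : ι → ℝ} (h : (opoly a c).Nonempty) :
    0 < pvol μ a c :=
  ENNReal.toReal_pos ((isOpen_opoly a c).measure_pos μ h).ne' (ha.measure_opoly_lt_top c).ne

lemma PosSpan.pvol_mono (ha : PosSpan a) {s : Set E} {c : ι → ℝ} (h : s ⊆ opoly a c) :
    μ.real s ≤ pvol μ a c :=
  measureReal_mono h (ha.measure_opoly_lt_top c).ne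

lemma measure_hyperplane {φ : E →L[ℝ] ℝ} (hφ : φ ≠ 0) (t : ℝ) : μ {x | φ x = t} = 0 := by
  have hs : ∃ x, φ x = t := by
    obtain ⟨x, hx⟩ : ∃ x, φ x ≠ 0 := by
      by_contra! h
      exact hφ (ContinuousLinearMap.ext h)
    exact ⟨(t / φ x) • x, by simp [hx]⟩
  obtain ⟨x₀, hx₀⟩ := hs
  have hker : (φ : E →ₗ[ℝ] ℝ).ker ≠ ⊤ := by
    intro h
    rw [LinearMap.ker_eq_top] at h
    exact hφ (ContinuousLinearMap.ext fun x => by simpa using LinearMap.congr_fun h x)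
  have h1 := Measure.addHaar_submodule μ _ hker
  rw [← measure_preimage_add_right μ (-x₀)] at h1
  convert h1 using 2
  ext x
  simp [← hx₀, add_neg_eq_zero]

/-- The volume of an open polytope depends continuously on the right-hand sides, provided that
no constraint with zero normal is tight. -/
lemma PosSpan.continuousAt_pvol (ha : PosSpan a) {c₀ : ι → ℝ} (h0 : ∀ j, a j = 0 → c₀ j ≠ 0) :
    ContinuousAt (pvol μ a) c₀ := by
  have hrw : pvol μ a = fun c => ∫ x, (opoly a c).indicator 1 x ∂μ := by
    ext c
    rw [integral_indicator_one (isOpen_opoly a c).measurableSet, pvol]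
  rw [hrw]
  obtain ⟨K, hK, hsub⟩ := ha.opoly_subset_closedBall
  refine continuousAt_of_dominated
    (bound := (Metric.closedBall (0 : E) (K * (‖c₀‖ + 1))).indicator 1) ?_ ?_ ?_ ?_
  · exact Eventually.of_forall fun c =>
      (aestronglyMeasurable_const.indicator (isOpen_opoly a c).measurableSet)
  · have : ∀ᶠ c in 𝓝 c₀, ‖c‖ < ‖c₀‖ + 1 :=
      continuous_norm.continuousAt.eventually (gt_mem_nhds (by simp))
    filter_upwards [this] with c hc
    refine Eventually.of_forall fun x => ?_
    rw [norm_indicator_eq_indicator_norm]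
    simp only [Pi.one_apply, norm_one]
    refine indicator_le_indicator_of_subset ?_ (fun _ => zero_le_one) x
    exact (hsub c).trans (Metric.closedBall_subset_closedBall (by gcongr))
  · rw [integrable_indicator_iff measurableSet_closedBall]
    exact integrableOn_const measure_closedBall_lt_top.ne
  · have hae : ∀ᵐ x ∂μ, ∀ j, a j x ≠ c₀ j := by
      rw [ae_all_iff]
      intro j
      by_cases hj : a j = 0
      · exact Eventually.of_forall fun x => by simpa [hj] using (h0 j hj).symm
      · rw [ae_iff]
        simpa using measure_hyperplane (μ := μ) hj (c₀ j)
    filter_upwards [hae] with x hx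
    have hev : ∀ᶠ c in 𝓝 c₀, ∀ j, (a j x < c j ↔ a j x < c₀ j) := by
      rw [eventually_all]
      intro j
      have hcj : ContinuousAt (fun c : ι → ℝ => c j) c₀ := (continuous_apply j).continuousAt
      rcases lt_or_gt_of_ne (hx j) with h | h
      · filter_upwards [hcj.eventually (lt_mem_nhds h)] with c hc
        simp [h, hc]
      · filter_upwards [hcj.eventually (gt_mem_nhds h)] with c hc
        exact iff_of_false (not_lt.2 (le_of_lt hc)) (not_lt.2 (le_of_lt h))
    refine tendsto_nhds_of_eventually_eq ?_
    filter_upwards [hev] with c hc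
    have : x ∈ opoly a c ↔ x ∈ opoly a c₀ := forall_congr' hc
    by_cases hx' : x ∈ opoly a c₀
    · rw [indicator_of_mem hx', indicator_of_mem (this.2 hx')]
    · rw [indicator_of_notMem hx', indicator_of_notMem (fun h => hx' (this.1 h))]

end Vol

end

/-! ### Slices by parallel hyperplanes -/

section

open MeasureTheory Set Filter Topology Asymptotics
set_option linter.unusedSectionVars false

variable {ι : Type*} [Fintype ι] {E : Type*} [NormedAddCommGroup E] [NormedSpace ℝ E]
  [FiniteDimensional ℝ E] [MeasurableSpace E] [BorelSpace E]
  {μ : Measure E} [μ.IsAddHaarMeasure] {m : ℕ}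

/-- Linear coordinates `L : ℝ × ℝ^m ≃ E` whose first coordinate is the functional `φ`, together
with the factor `κ` by which `μ` differs from Lebesgue measure in these coordinates. -/
structure Slicing (μ : Measure E) (φ : E →L[ℝ] ℝ) (m : ℕ) where
  /-- the coordinates -/
  L : (ℝ × (Fin m → ℝ)) ≃L[ℝ] E
  /-- the scaling factor of the measure -/
  κ : ℝ
  κ_pos : 0 < κ
  apply_L : ∀ p, φ (L p) = p.1
  measure_eq : μ = ENNReal.ofReal κ • (volume.map L)

lemma Slicing.nonempty (hE : Module.finrank ℝ E = m + 1) {φ : E →L[ℝ] ℝ} (hφ : φ ≠ 0) :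
    Nonempty (Slicing μ φ m) := by
  obtain ⟨x, hx⟩ : ∃ x, φ x ≠ 0 := by
    by_contra! h
    exact hφ (ContinuousLinearMap.ext h)
  set x₀ := (φ x)⁻¹ • x
  have hx₀ : φ x₀ = 1 := by simp [x₀, hx]
  have hker : Module.finrank ℝ (φ : E →ₗ[ℝ] ℝ).ker = m := by
    have h1 := (φ : E →ₗ[ℝ] ℝ).finrank_range_add_finrank_ker
    have h2 : (φ : E →ₗ[ℝ] ℝ).range = ⊤ := by
      rw [LinearMap.range_eq_top]
      intro t
      exact ⟨t • x₀, by simp [hx₀]⟩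
    rw [h2, finrank_top, hE, Module.finrank_self] at h1
    omega
  have e : (Fin m → ℝ) ≃ₗ[ℝ] (φ : E →ₗ[ℝ] ℝ).ker :=
    LinearEquiv.ofFinrankEq _ _ (by simp [hker])
  let f : (ℝ × (Fin m → ℝ)) →ₗ[ℝ] E :=
    (LinearMap.toSpanSingleton ℝ E x₀).coprod ((φ : E →ₗ[ℝ] ℝ).ker.subtype ∘ₗ e.toLinearMap)
  have hf : ∀ p, f p = p.1 • x₀ + (e p.2 : E) := fun p => by simp [f]
  have hφf : ∀ p, φ (f p) = p.1 := fun p => by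
    have : φ (e p.2 : E) = 0 := (e p.2).2
    simp [hf, hx₀, this]
  have hinj : Function.Injective f := by
    rw [← LinearMap.ker_eq_bot, LinearMap.ker_eq_bot']
    intro p hp
    have h1 : p.1 = 0 := by rw [← hφf p, hp, map_zero]
    have h2 : e p.2 = 0 := by
      have := hf p
      rw [hp, h1, zero_smul, zero_add] at this
      exact Subtype.ext this.symm
    exact Prod.ext h1 (by simpa using h2)
  have hdim : Module.finrank ℝ (ℝ × (Fin m → ℝ)) = Module.finrank ℝ E := by
    rw [Module.finrank_prod, hE]; simp [add_comm]
  let L : (ℝ × (Fin m → ℝ)) ≃L[ℝ] E :=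
    (LinearMap.linearEquivOfInjective f hinj hdim).toContinuousLinearEquiv
  have hL : ∀ p, L p = f p := fun p => rfl
  have hHaar : (volume.map L : Measure E).IsAddHaarMeasure := by
    have : (volume : Measure (ℝ × (Fin m → ℝ))).IsAddHaarMeasure :=
      Measure.prod.instIsAddHaarMeasure _ _
    exact L.isAddHaarMeasure_map volume
  have hμ := Measure.isAddLeftInvariant_eq_smul μ (volume.map L)
  have hpos := Measure.addHaarScalarFactor_pos_of_isAddHaarMeasure μ (volume.map L)
  refine ⟨⟨L, Measure.addHaarScalarFactor μ (volume.map L), by exact_mod_cast hpos,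
    fun p => by rw [hL, hφf], ?_⟩⟩
  rw [ENNReal.ofReal_coe_nnreal]
  exact hμ

namespace Slicing

variable {φ : E →L[ℝ] ℝ} (S : Slicing μ φ m) (a : ι → E →L[ℝ] ℝ)

lemma integral_eq (g : E → ℝ) : ∫ x, g x ∂μ = S.κ * ∫ p, g (S.L p) := by
  conv_lhs => rw [S.measure_eq]
  rw [integral_smul_measure, ENNReal.toReal_ofReal S.κ_pos.le, smul_eq_mul]
  exact congrArg (S.κ * ·) (S.L.toHomeomorph.measurableEmbedding.integral_map g)

lemma integrable_comp {g : E → ℝ} (hg : Integrable g μ) : Integrable (fun p => g (S.L p)) := by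
  rw [S.measure_eq, integrable_smul_measure (by simpa using S.κ_pos) ENNReal.ofReal_ne_top] at hg
  exact (S.L.toHomeomorph.measurableEmbedding.integrable_map_iff).1 hg

/-- The normals of the slices, i.e. of the intersections with level sets of `φ`. -/
noncomputable def rest (j : ι) : (Fin m → ℝ) →L[ℝ] ℝ :=
  (a j).comp ((S.L : (ℝ × (Fin m → ℝ)) →L[ℝ] E).comp (ContinuousLinearMap.inr ℝ ℝ (Fin m → ℝ)))

/-- The rates at which the right-hand sides of the slices change with the level. -/
noncomputable def b (j : ι) : ℝ := a j (S.L (1, 0))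

lemma rest_apply (j : ι) (y : Fin m → ℝ) : S.rest a j y = a j (S.L (0, y)) := rfl

lemma apply_eq (j : ι) (s : ℝ) (y : Fin m → ℝ) :
    a j (S.L (s, y)) = s * S.b a j + S.rest a j y := by
  have : ((s, y) : ℝ × (Fin m → ℝ)) = s • (1, 0) + (0, y) := by simp
  rw [this, map_add, map_add, map_smul, map_smul, smul_eq_mul, b, rest_apply]

/-- The slice of an open polytope at a given level is an open polytope. -/
lemma mem_opoly_iff (c : ι → ℝ) (s : ℝ) (y : Fin m → ℝ) :
    S.L (s, y) ∈ opoly a c ↔ y ∈ opoly (S.rest a) (c - s • S.b a) := by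
  simp only [mem_opoly, apply_eq, Pi.sub_apply, Pi.smul_apply, smul_eq_mul, lt_sub_iff_add_lt,
    add_comm]

variable {a}

lemma posSpan (ha : PosSpan a) : PosSpan (S.rest a) := by
  intro y hy
  have := ha (S.L (0, y)) hy
  simpa using this

lemma rest_self {i : ι} (S : Slicing μ (a i) m) : S.rest a i = 0 := by
  ext y; rw [rest_apply, S.apply_L]; rfl

lemma b_self {i : ι} (S : Slicing μ (a i) m) : S.b a i = 1 := S.apply_L _

/-- The volume of the slice at level `s`. -/
noncomputable def A (S : Slicing μ φ m) (a : ι → E →L[ℝ] ℝ) (c : ι → ℝ) (s : ℝ) : ℝ :=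
  pvol volume (S.rest a) (c - s • S.b a)

lemma A_nonneg (c : ι → ℝ) (s : ℝ) : 0 ≤ S.A a c s := measureReal_nonneg

/-- Fubini's theorem for functions of the level. -/
lemma setIntegral_eq (ha : PosSpan a) (c : ι → ℝ) {g : ℝ → ℝ} (hg : Continuous g) :
    IntegrableOn (fun x => g (φ x)) (opoly a c) μ ∧ Integrable (fun s => g s * S.A a c s) ∧
    ∫ x in opoly a c, g (φ x) ∂μ = S.κ * ∫ s, g s * S.A a c s := by
  obtain ⟨K, hK, hsub⟩ := ha.opoly_subset_closedBall
  have hmeas := (isOpen_opoly a c).measurableSet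
  have hint : IntegrableOn (fun x => g (φ x)) (opoly a c) μ :=
    ((hg.comp φ.continuous).continuousOn.integrableOn_compact
      (isCompact_closedBall (0 : E) (K * ‖c‖))).mono_set (hsub c)
  have hint' : Integrable ((opoly a c).indicator fun x => g (φ x)) μ := hint.integrable_indicator hmeas
  have h1 := S.integrable_comp hint'
  have hind : ∀ s y, (opoly a c).indicator (fun x => g (φ x)) (S.L (s, y)) =
      (opoly (S.rest a) (c - s • S.b a)).indicator (fun _ => g s) y := by
    intro s y
    by_cases h : S.L (s, y) ∈ opoly a c
    · rw [indicator_of_mem h, indicator_of_mem ((S.mem_opoly_iff a c s y).1 h), S.apply_L]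
    · rw [indicator_of_notMem h, indicator_of_notMem (fun h' => h ((S.mem_opoly_iff a c s y).2 h'))]
  have hslice : ∀ s, ∫ y, (opoly a c).indicator (fun x => g (φ x)) (S.L (s, y)) =
      g s * S.A a c s := by
    intro s
    simp only [hind]
    rw [integral_indicator_const _ (isOpen_opoly _ _).measurableSet, smul_eq_mul, mul_comm]
    rfl
  refine ⟨hint, ?_, ?_⟩
  · have := h1.integral_prod_left
    simpa only [hslice] using this
  · rw [← integral_indicator hmeas, S.integral_eq]
    have : ∫ p, (opoly a c).indicator (fun x => g (φ x)) (S.L p) =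
        ∫ s, ∫ y, (opoly a c).indicator (fun x => g (φ x)) (S.L (s, y)) := integral_prod _ h1
    rw [this]
    simp only [hslice]

lemma integrable_A (ha : PosSpan a) (c : ι → ℝ) : Integrable (S.A a c) := by
  simpa using (S.setIntegral_eq ha c (g := fun _ => 1) continuous_const).2.1

lemma pvol_eq (ha : PosSpan a) (c : ι → ℝ) : pvol μ a c = S.κ * ∫ s, S.A a c s := by
  have := (S.setIntegral_eq ha c (g := fun _ => 1) continuous_const).2.2
  simpa [pvol] using this

end Slicing

end

/-! ### Facet volumes and derivatives of the volume -/

section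

open MeasureTheory Set Filter Topology Asymptotics
set_option linter.unusedSectionVars false

variable {ι : Type*} [Fintype ι] [DecidableEq ι] {E : Type*} [NormedAddCommGroup E]
  [NormedSpace ℝ E] [FiniteDimensional ℝ E] [MeasurableSpace E] [BorelSpace E]
  {μ : Measure E} [μ.IsAddHaarMeasure] {m : ℕ} {a : ι → E →L[ℝ] ℝ}

/-- No two constraints of the system `a j x ≤ c j` have the same (possibly empty) boundary
hyperplane, and no constraint with zero normal is tight. -/
def SimpleAt (a : ι → E →L[ℝ] ℝ) (c : ι → ℝ) : Prop :=
  (∀ i, a i = 0 → c i ≠ 0) ∧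
    ∀ i j, a i ≠ 0 → i ≠ j → ∀ t : ℝ, a j = t • a i → c j ≠ t * c i

lemma SimpleAt.eventually {c₀ : ι → ℝ} (h : SimpleAt a c₀) : ∀ᶠ c in 𝓝 c₀, SimpleAt a c := by
  have hc : ∀ j, ContinuousAt (fun c : ι → ℝ => c j) c₀ := fun j =>
    (continuous_apply j).continuousAt
  refine Filter.Eventually.and ?_ ?_
  · rw [eventually_all]
    intro i
    by_cases hi : a i = 0
    · filter_upwards [(hc i).eventually_ne (h.1 i hi)] with c hc _ using hc
    · exact Eventually.of_forall fun c h => absurd h hi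
  · rw [eventually_all]
    intro i
    rw [eventually_all]
    intro j
    by_cases hi : a i = 0
    · exact Eventually.of_forall fun c h => absurd hi h
    by_cases hij : i = j
    · exact Eventually.of_forall fun c _ h => absurd hij h
    by_cases ht : ∃ t : ℝ, a j = t • a i
    · obtain ⟨t, ht⟩ := ht
      have : ContinuousAt (fun c : ι → ℝ => c j - t * c i) c₀ :=
        (hc j).sub ((hc i).const_mul t)
      filter_upwards [this.eventually_ne (sub_ne_zero.2 (h.2 i j hi hij t ht))] with c hc _ _ t' ht'
      have : t' = t := smul_left_injective ℝ hi (ht'.symm.trans ht)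
      rw [this]
      exact sub_ne_zero.1 hc
    · exact Eventually.of_forall fun c _ _ t h => absurd ⟨t, h⟩ ht

namespace Slicing

variable {i : ι} (S : Slicing μ (a i) m)

lemma normal_ne_zero {φ : E →L[ℝ] ℝ} (S : Slicing μ φ m) : φ ≠ 0 := by
  intro h
  have := S.apply_L (1, 0)
  simp [h] at this

/-- The right-hand sides of the slice at level `s` along the `i`-th normal. The `i`-th constraint
no longer depends on the point; it is replaced by the void constraint `0 < 1`. -/
noncomputable def rhs (S : Slicing μ (a i) m) (c : ι → ℝ) (s : ℝ) : ι → ℝ :=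
  Function.update (c - s • S.b a) i 1

/-- The volume of the `i`-th facet. -/
noncomputable def facet (S : Slicing μ (a i) m) (c : ι → ℝ) : ℝ :=
  S.κ * pvol volume (S.rest a) (S.rhs c (c i))

lemma A_of_lt {c : ι → ℝ} {s : ℝ} (hs : s < c i) :
    S.A a c s = pvol volume (S.rest a) (S.rhs c s) := by
  have : opoly (S.rest a) (c - s • S.b a) = opoly (S.rest a) (S.rhs c s) := by
    ext y
    refine forall_congr' fun j => ?_
    rcases eq_or_ne j i with rfl | hj
    · simp [rhs, S.rest_self, S.b_self, hs]
    · simp [rhs, hj]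
  rw [A, pvol, this, pvol]

lemma A_of_le {c : ι → ℝ} {s : ℝ} (hs : c i ≤ s) : S.A a c s = 0 := by
  have : opoly (S.rest a) (c - s • S.b a) = ∅ := by
    ext y
    simp only [mem_empty_iff_false, iff_false]
    intro h
    have := h i
    simp only [S.rest_self, Pi.sub_apply, Pi.smul_apply, S.b_self, smul_eq_mul, mul_one] at this
    simp at this
    linarith
  rw [A, pvol, this, measureReal_empty]

lemma rest_eq_zero_iff {φ : E →L[ℝ] ℝ} (S : Slicing μ φ m) (ψ : ι → E →L[ℝ] ℝ) (j : ι) :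
    S.rest ψ j = 0 ↔ ψ j = S.b ψ j • φ := by
  constructor
  · intro h
    ext x
    obtain ⟨⟨s, y⟩, rfl⟩ := S.L.surjective x
    simp [S.apply_eq, h, S.apply_L, mul_comm]
  · intro h
    ext y
    rw [rest_apply, h]
    simp [S.apply_L]

lemma rhs_ne_zero {c : ι → ℝ} (hs : SimpleAt a c) (j : ι) (hj : S.rest a j = 0) :
    S.rhs c (c i) j ≠ 0 := by
  rcases eq_or_ne j i with rfl | hij
  · simp [rhs]
  · have := hs.2 i j S.normal_ne_zero hij.symm _ ((S.rest_eq_zero_iff a j).1 hj)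
    simp only [rhs, Function.update_of_ne hij, Pi.sub_apply, Pi.smul_apply, smul_eq_mul]
    rw [sub_ne_zero, mul_comm]
    exact this

lemma continuous_rhs : Continuous fun q : (ι → ℝ) × ℝ => S.rhs q.1 q.2 := by
  unfold rhs
  exact (continuous_fst.sub (continuous_snd.smul continuous_const)).update i continuous_const

lemma continuousAt_facet (ha : PosSpan a) {c : ι → ℝ} (hs : SimpleAt a c) :
    ContinuousAt S.facet c := by
  have h1 := (S.posSpan ha).continuousAt_pvol (μ := volume) (S.rhs_ne_zero hs)
  have h2 : Continuous fun c : ι → ℝ => S.rhs c (c i) :=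
    S.continuous_rhs.comp (continuous_id.prodMk (continuous_apply i))
  exact continuousAt_const.mul
    (ContinuousAt.comp (f := fun c : ι → ℝ => S.rhs c (c i)) h1 h2.continuousAt)

/-- The derivative of the volume with respect to the position of the `i`-th facet hyperplane is
the volume of the `i`-th facet. -/
lemma hasDerivAt_pvol (ha : PosSpan a) {c : ι → ℝ} (hs : SimpleAt a c) :
    HasDerivAt (fun t => pvol μ a (Function.update c i t)) (S.facet c) (c i) := by
  set h : ℝ → ℝ := fun s => pvol volume (S.rest a) (S.rhs c s) with hh
  have hA : ∀ t, S.A a (Function.update c i t) = (Iio t).indicator h := by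
    intro t
    ext s
    by_cases hst : s < t
    · rw [indicator_of_mem (mem_Iio.2 hst), S.A_of_lt (by simpa using hst)]
      simp only [hh]
      congr 1
      ext j
      rcases eq_or_ne j i with rfl | hj
      · simp [rhs]
      · simp [rhs, hj]
    · rw [indicator_of_notMem (by simpa using hst), S.A_of_le (by simpa using hst)]
  have hint : ∀ t, IntegrableOn h (Iic t) := by
    intro t
    rw [integrableOn_Iic_iff_integrableOn_Iio, ← integrable_indicator_iff measurableSet_Iio, ← hA]
    exact S.integrable_A ha _
  have hV : ∀ t, pvol μ a (Function.update c i t) =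
      S.κ * ((∫ s in Iic (c i), h s) + ∫ s in (c i)..t, h s) := by
    intro t
    rw [S.pvol_eq ha, hA, integral_indicator measurableSet_Iio, ← integral_Iic_eq_integral_Iio,
      ← intervalIntegral.integral_Iic_sub_Iic (hint _) (hint _)]
    ring
  have hcont : ContinuousAt h (c i) := by
    have h1 := (S.posSpan ha).continuousAt_pvol (μ := volume) (S.rhs_ne_zero hs)
    have h2 : Continuous fun s : ℝ => S.rhs c s :=
      S.continuous_rhs.comp (continuous_const.prodMk continuous_id)
    exact ContinuousAt.comp (f := fun s : ℝ => S.rhs c s) h1 h2.continuousAt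
  have hd : HasDerivAt (fun t => ∫ s in (c i)..t, h s) (h (c i)) (c i) := by
    refine intervalIntegral.integral_hasDerivAt_right (by simp) ?_ hcont
    exact ⟨Iic (c i + 1), Iic_mem_nhds (by linarith), (hint _).aestronglyMeasurable⟩
  simp_rw [hV]
  exact (hd.const_add _).const_mul _

end Slicing

/-- `G i` is the volume of the `i`-th facet as a function of the right-hand sides
(and `0` if the `i`-th normal vanishes). -/
def IsFacetVolume (μ : Measure E) (m : ℕ) (a : ι → E →L[ℝ] ℝ) (G : ι → (ι → ℝ) → ℝ) : Prop :=
  ∀ i, (a i = 0 ∧ G i = 0) ∨ ∃ S : Slicing μ (a i) m, G i = S.facet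

lemma exists_isFacetVolume (hE : Module.finrank ℝ E = m + 1) (a : ι → E →L[ℝ] ℝ) :
    ∃ G, IsFacetVolume μ m a G := by
  have : ∀ i, ∃ g : (ι → ℝ) → ℝ, (a i = 0 ∧ g = 0) ∨ ∃ S : Slicing μ (a i) m, g = S.facet := by
    intro i
    by_cases hi : a i = 0
    · exact ⟨0, Or.inl ⟨hi, rfl⟩⟩
    · obtain ⟨S⟩ := Slicing.nonempty (μ := μ) hE hi
      exact ⟨_, Or.inr ⟨S, rfl⟩⟩
  choose G hG using this
  exact ⟨G, hG⟩

lemma IsFacetVolume.continuousAt {G : ι → (ι → ℝ) → ℝ} (hG : IsFacetVolume μ m a G)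
    (ha : PosSpan a) {c : ι → ℝ} (hs : SimpleAt a c) (i : ι) : ContinuousAt (G i) c := by
  rcases hG i with ⟨-, h⟩ | ⟨S, h⟩
  · rw [h]; exact continuousAt_const
  · rw [h]; exact S.continuousAt_facet ha hs

lemma IsFacetVolume.hasFDerivAt {G : ι → (ι → ℝ) → ℝ} (hG : IsFacetVolume μ m a G)
    (ha : PosSpan a) {c : ι → ℝ} (hs : SimpleAt a c) :
    HasFDerivAt (pvol μ a) (∑ i, G i c • (ContinuousLinearMap.proj i : (ι → ℝ) →L[ℝ] ℝ)) c := by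
  refine hasFDerivAt_of_partial (fun i => ?_) (hG.continuousAt ha hs)
  filter_upwards [hs.eventually] with c hs
  rcases hG i with ⟨hi, h⟩ | ⟨S, h⟩
  · rw [h]
    refine (hasDerivAt_const (c i) (pvol μ a c)).congr_of_eventuallyEq ?_
    have hpos : ∀ᶠ t in 𝓝 (c i), (0 < t ↔ 0 < c i) := by
      rcases lt_or_gt_of_ne (hs.1 i hi) with h | h
      · filter_upwards [gt_mem_nhds h] with t ht
        exact iff_of_false (not_lt.2 ht.le) (not_lt.2 h.le)
      · filter_upwards [lt_mem_nhds h] with t ht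
        exact iff_of_true ht h
    filter_upwards [hpos] with t ht
    have : opoly a (Function.update c i t) = opoly a c := by
      ext x
      refine forall_congr' fun j => ?_
      rcases eq_or_ne j i with rfl | hj
      · simpa [hi] using ht
      · simp [hj]
    simp only [pvol, this]
  · rw [h]; exact S.hasDerivAt_pvol ha hs

/-- If no three normals are affinely dependent, the facets at `c = 1` are again simple, so that
their volumes are differentiable there. -/
lemma Slicing.simpleAt_rest {i : ι} (S : Slicing μ (a i) m) (hs : SimpleAt a 1)
    (hcol : ∀ i j k : ι, i ≠ j → i ≠ k → j ≠ k → ∀ t : ℝ, a k ≠ t • a j + (1 - t) • a i) :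
    SimpleAt (S.rest a) (S.rhs 1 1) := by
  refine ⟨fun j hj => S.rhs_ne_zero hs j hj, fun j k hj hjk t ht => ?_⟩
  have hji : j ≠ i := by rintro rfl; exact hj S.rest_self
  rcases eq_or_ne k i with rfl | hki
  · have ht0 : t = 0 := by
      rw [S.rest_self] at ht
      exact (smul_eq_zero.1 ht.symm).resolve_right hj
    simp [rhs, ht0]
  · simp only [rhs, Function.update_of_ne hji, Function.update_of_ne hki, Pi.sub_apply,
      Pi.smul_apply, Pi.one_apply, smul_eq_mul, one_mul]
    intro h
    refine hcol i j k hji.symm hki.symm hjk t ?_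
    ext x
    obtain ⟨⟨s, y⟩, rfl⟩ := S.L.surjective x
    have h1 : S.rest a k y = t * S.rest a j y := by rw [ht]; rfl
    simp only [add_apply, smul_apply, S.apply_eq a k,
      S.apply_eq a j, S.apply_L, smul_eq_mul, h1]
    linear_combination (-s) * h

lemma IsFacetVolume.differentiableAt
    {G : ι → (ι → ℝ) → ℝ} (hG : IsFacetVolume μ (m + 1) a G) (ha : PosSpan a) (hs : SimpleAt a 1)
    (hcol : ∀ i j k : ι, i ≠ j → i ≠ k → j ≠ k → ∀ t : ℝ, a k ≠ t • a j + (1 - t) • a i)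
    (i : ι) : DifferentiableAt ℝ (G i) 1 := by
  rcases hG i with ⟨-, h⟩ | ⟨S, h⟩
  · rw [h]; exact differentiableAt_const 0
  · rw [h]
    obtain ⟨G', hG'⟩ := exists_isFacetVolume (μ := volume) (m := m) (by simp) (S.rest a)
    have h1 := (hG'.hasFDerivAt (S.posSpan ha) (S.simpleAt_rest hs hcol)).differentiableAt
    have h2 : Differentiable ℝ fun c : ι → ℝ => S.rhs c (c i) := by
      rw [differentiable_pi]
      intro j
      rcases eq_or_ne j i with rfl | hj
      · simp [Slicing.rhs]
      · simp only [Slicing.rhs, Function.update_of_ne hj, Pi.sub_apply, Pi.smul_apply, smul_eq_mul]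
        fun_prop
    exact (DifferentiableAt.comp (f := fun c : ι → ℝ => S.rhs c (c i)) (1 : ι → ℝ) h1
      h2.differentiableAt).const_mul _

end

/-! ### Gain in the Brunn–Minkowski inequality along one direction -/

section

open MeasureTheory Set Filter Topology Asymptotics
set_option linter.unusedSectionVars false

/-- A nonempty bounded open convex set of real numbers is an interval. -/
lemma exists_eq_Ioo {U : Set ℝ} (ho : IsOpen U) (hc : Convex ℝ U) (hb : Bornology.IsBounded U)
    (hne : U.Nonempty) : ∃ a₀ a₁ : ℝ, a₀ < a₁ ∧ U = Ioo a₀ a₁ := by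
  have h1 : Ioo (sInf U) (sSup U) ⊆ U :=
    IsConnected.Ioo_csInf_csSup_subset ⟨hne, hc.isPreconnected⟩ hb.bddBelow hb.bddAbove
  have h2 : U ⊆ Ioo (sInf U) (sSup U) := by
    rw [← interior_Icc]
    exact interior_maximal (subset_Icc_csInf_csSup hb.bddBelow hb.bddAbove) ho
  refine ⟨_, _, ?_, h2.antisymm h1⟩
  obtain ⟨x, hx⟩ := hne
  exact (h2 hx).1.trans (h2 hx).2

variable {ι : Type*} [Fintype ι] {E : Type*} [NormedAddCommGroup E]
  [NormedSpace ℝ E] [FiniteDimensional ℝ E] [MeasurableSpace E] [BorelSpace E]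
  {μ : Measure E} [μ.IsAddHaarMeasure] {m : ℕ} {a : ι → E →L[ℝ] ℝ}

lemma pvol_of_empty {c : ι → ℝ} (h : opoly a c = ∅) : pvol μ a c = 0 := by
  rw [pvol, h, measureReal_empty]

lemma midpoint_mem_opoly {c c' : ι → ℝ} {x x' : E} (hx : x ∈ opoly a c) (hx' : x' ∈ opoly a c') :
    (1 / 2 : ℝ) • (x + x') ∈ opoly a ((1 / 2 : ℝ) • (c + c')) := by
  intro j
  have := hx j
  have := hx' j
  simp only [map_smul, map_add, Pi.smul_apply, Pi.add_apply, smul_eq_mul]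
  linarith

namespace Slicing
variable {φ : E →L[ℝ] ℝ} (S : Slicing μ φ m)

lemma mem_image_iff (c : ι → ℝ) (s : ℝ) :
    s ∈ φ '' opoly a c ↔ (opoly (S.rest a) (c - s • S.b a)).Nonempty := by
  constructor
  · rintro ⟨x, hx, rfl⟩
    obtain ⟨⟨s, y⟩, rfl⟩ := S.L.surjective x
    rw [S.apply_L]
    exact ⟨y, (S.mem_opoly_iff a c s y).1 hx⟩
  · rintro ⟨y, hy⟩
    exact ⟨S.L (s, y), (S.mem_opoly_iff a c s y).2 hy, S.apply_L _⟩

lemma A_of_notMem {c : ι → ℝ} {s : ℝ} (hs : s ∉ φ '' opoly a c) : S.A a c s = 0 := by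
  rw [S.mem_image_iff, not_nonempty_iff_eq_empty] at hs
  exact pvol_of_empty hs

/-- The slice volumes of a nonempty open polytope form a density. -/
lemma exists_isDensity (ha : PosSpan a) {c : ι → ℝ} (hne : (opoly a c).Nonempty) :
    ∃ a₀ a₁, φ '' opoly a c = Ioo a₀ a₁ ∧ IsDensity (S.A a c) a₀ a₁ := by
  have hopen : IsOpen (φ '' opoly a c) := by
    have : φ '' opoly a c = Prod.fst '' (S.L ⁻¹' opoly a c) := by
      ext s
      constructor
      · rintro ⟨x, hx, rfl⟩
        refine ⟨S.L.symm x, by simpa using hx, ?_⟩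
        rw [← S.apply_L, S.L.apply_symm_apply]
      · rintro ⟨p, hp, rfl⟩
        exact ⟨S.L p, hp, S.apply_L p⟩
    rw [this]
    exact isOpenMap_fst _ ((isOpen_opoly a c).preimage S.L.continuous)
  have hconv : Convex ℝ (φ '' opoly a c) :=
    (convex_opoly a c).is_linear_image φ.isLinear
  have hbdd : Bornology.IsBounded (φ '' opoly a c) := by
    obtain ⟨K, -, h⟩ := ha.opoly_subset_closedBall
    exact φ.lipschitz.isBounded_image (Metric.isBounded_closedBall.subset (h c))
  obtain ⟨a₀, a₁, hlt, heq⟩ := exists_eq_Ioo hopen hconv hbdd (hne.image φ)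
  refine ⟨a₀, a₁, heq, hlt, ?_, ?_, (S.integrable_A ha c).integrableOn⟩
  · intro s hs
    rw [← heq, S.mem_image_iff] at hs
    obtain ⟨y, hy⟩ := hs
    refine ContinuousAt.continuousWithinAt ?_
    have h1 := (S.posSpan ha).continuousAt_pvol (μ := volume) (c₀ := c - s • S.b a) (by
      intro j hj
      have := hy j
      rw [hj] at this
      exact (ne_of_gt this))
    have h2 : Continuous fun s : ℝ => c - s • S.b a := by fun_prop
    exact ContinuousAt.comp (f := fun s : ℝ => c - s • S.b a) h1 h2.continuousAt
  · intro s hs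
    rw [← heq, S.mem_image_iff] at hs
    exact (S.posSpan ha).pvol_pos hs

lemma intervalIntegral_eq {c : ι → ℝ} {a₀ a₁ : ℝ} (hle : a₀ ≤ a₁)
    (h : φ '' opoly a c = Ioo a₀ a₁) (g : ℝ → ℝ) :
    ∫ s in a₀..a₁, g s * S.A a c s = ∫ s, g s * S.A a c s := by
  rw [intervalIntegral.integral_of_le hle, integral_Ioc_eq_integral_Ioo]
  refine setIntegral_eq_integral_of_forall_compl_eq_zero fun s hs => ?_
  rw [S.A_of_notMem (h ▸ hs), mul_zero]

lemma intervalIntegral_A_eq {c : ι → ℝ} {a₀ a₁ : ℝ} (hle : a₀ ≤ a₁)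
    (h : φ '' opoly a c = Ioo a₀ a₁) : ∫ s in a₀..a₁, S.A a c s = ∫ s, S.A a c s := by
  simpa using S.intervalIntegral_eq hle h (fun _ => 1)

end Slicing

/-- Midpoint log-concavity of the volume as a function of the right-hand sides (a form of the
Brunn–Minkowski inequality), by induction on the dimension. -/
theorem pvol_mul_le (m : ℕ) {a : ι → (Fin m → ℝ) →L[ℝ] ℝ} (ha : PosSpan a) (c c' : ι → ℝ) :
    pvol volume a c * pvol volume a c' ≤ pvol volume a ((1 / 2 : ℝ) • (c + c')) ^ 2 := by
  induction m generalizing c c' with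
  | zero =>
    rcases (opoly a c).eq_empty_or_nonempty with h | h
    · rw [pvol_of_empty h, zero_mul]; positivity
    rcases (opoly a c').eq_empty_or_nonempty with h' | h'
    · rw [pvol_of_empty h', mul_zero]; positivity
    obtain ⟨x, hx⟩ := h
    obtain ⟨x', hx'⟩ := h'
    have h1 : ∀ (d : ι → ℝ) (z : Fin 0 → ℝ), z ∈ opoly a d → opoly a d = univ := fun d z hz =>
      eq_univ_of_forall fun y => Subsingleton.elim z y ▸ hz
    rw [pvol, pvol, pvol, h1 _ _ hx, h1 _ _ hx', h1 _ _ (midpoint_mem_opoly hx hx'), sq]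
  | succ m ih =>
    rcases (opoly a c).eq_empty_or_nonempty with h | h
    · rw [pvol_of_empty h, zero_mul]; positivity
    rcases (opoly a c').eq_empty_or_nonempty with h' | h'
    · rw [pvol_of_empty h', mul_zero]; positivity
    obtain ⟨i, hi⟩ : ∃ i, a i ≠ 0 := by
      by_contra! h0
      have := ha 1 fun j => by simp [h0 j]
      exact one_ne_zero this
    obtain ⟨S⟩ := Slicing.nonempty (m := m) (μ := (volume : Measure (Fin (m + 1) → ℝ))) (by simp) hi
    obtain ⟨a₀, a₁, hU, hA⟩ := S.exists_isDensity ha h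
    obtain ⟨b₀, b₁, hU', hB⟩ := S.exists_isDensity ha h'
    have := hA.prekopa hB (S.A_nonneg ((1 / 2 : ℝ) • (c + c'))) (S.integrable_A ha _) (by
      intro s _ r _
      have := ih (S.posSpan ha) (c - s • S.b a) (c' - r • S.b a)
      have he : (1 / 2 : ℝ) • (c - s • S.b a + (c' - r • S.b a)) =
          (1 / 2 : ℝ) • (c + c') - ((s + r) / 2) • S.b a := by module
      rw [he] at this
      exact this)
    rw [S.intervalIntegral_A_eq hA.lt.le hU, S.intervalIntegral_A_eq hB.lt.le hU'] at this
    rw [S.pvol_eq ha, S.pvol_eq ha, S.pvol_eq ha, mul_pow, mul_mul_mul_comm, ← sq]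
    exact mul_le_mul_of_nonneg_left this (by positivity)

/-- The barycentre of an open polytope. -/
noncomputable def bary (μ : Measure E) (a : ι → E →L[ℝ] ℝ) (c : ι → ℝ) : E :=
  (pvol μ a c)⁻¹ • ∫ x in opoly a c, x ∂μ

lemma PosSpan.integrableOn_id (ha : PosSpan a) (c : ι → ℝ) :
    IntegrableOn (fun x : E => x) (opoly a c) μ := by
  obtain ⟨K, hK, hsub⟩ := ha.opoly_subset_closedBall
  exact (continuous_id.continuousOn.integrableOn_compact
      (isCompact_closedBall (0 : E) (K * ‖c‖))).mono_set (hsub c)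

namespace Slicing
variable {φ : E →L[ℝ] ℝ} (S : Slicing μ φ m)

lemma apply_bary (ha : PosSpan a) (c : ι → ℝ) :
    φ (bary μ a c) = (∫ s, s * S.A a c s) / ∫ s, S.A a c s := by
  have h1 := (S.setIntegral_eq ha c (g := fun s => s) continuous_id).2.2
  rw [bary, map_smul, ← ContinuousLinearMap.integral_comp_comm φ (ha.integrableOn_id c), h1,
    S.pvol_eq ha, smul_eq_mul]
  have := S.κ_pos
  field_simp

/-- Quantitative log-concavity of the volume: the deficit bounds the difference between the
displacement of the `i`-th facet hyperplane and that of the barycentre. -/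
lemma pvol_gain {i : ι} (S : Slicing μ (a i) m) (ha : PosSpan a) {c c' : ι → ℝ} {z z' : E}
    (hne : (opoly a c).Nonempty) (hne' : (opoly a c').Nonempty)
    (hz : ∀ j, a j z ≤ c j) (hz' : ∀ j, a j z' ≤ c' j) (hzi : a i z = c i) (hzi' : a i z' = c' i)
    {K : ℝ} (hK : 0 < K)
    (hcK : ∀ a₀ a₁, a i '' opoly a c = Ioo a₀ a₁ → ∀ s ∈ Ioo a₀ a₁,
      ∫ t in a₀..s, S.A a c t ≤ K * S.A a c s)
    (hcK' : ∀ a₀ a₁, a i '' opoly a c' = Ioo a₀ a₁ → ∀ s ∈ Ioo a₀ a₁,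
      ∫ t in a₀..s, S.A a c' t ≤ K * S.A a c' s) :
    √(pvol μ a c * pvol μ a c') *
      (1 + ((c' i - c i) - (a i (bary μ a c') - a i (bary μ a c))) ^ 2 / (8 * K ^ 2)) ≤
      pvol μ a ((1 / 2 : ℝ) • (c + c')) := by
  obtain ⟨a₀, a₁, hU, hA⟩ := S.exists_isDensity ha hne
  obtain ⟨b₀, b₁, hU', hB⟩ := S.exists_isDensity ha hne'
  -- the level set through a point of the closed facet is the top end of the interval
  have htop : ∀ (d : ι → ℝ) (w : E) (e₀ e₁ : ℝ), e₀ < e₁ → (opoly a d).Nonempty →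
      (∀ j, a j w ≤ d j) → a i w = d i → a i '' opoly a d = Ioo e₀ e₁ → e₁ = d i := by
    rintro d w e₀ e₁ hlt ⟨x, hx⟩ hw hwi he
    apply le_antisymm
    · refine le_of_forall_lt_imp_le_of_dense fun s hs => ?_
      rcases le_or_gt s e₀ with h | h
      · have : a i x ∈ Ioo e₀ e₁ := he ▸ mem_image_of_mem _ hx
        exact h.trans (this.1.le.trans (hx i).le)
      · have : s ∈ a i '' opoly a d := he ▸ ⟨h, hs⟩
        obtain ⟨y, hy, rfl⟩ := this
        exact (hy i).le
    · refine le_of_forall_pos_le_add fun ε hε => ?_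
      have hxi := hx i
      set θ := ε / (ε + (d i - a i x)) with hθ
      have hθ0 : 0 < θ := by have := sub_pos.2 hxi; positivity
      have hθ1 : θ ≤ 1 := by
        rw [hθ, div_le_one (by linarith)]; linarith
      have hmem : (1 - θ) • w + θ • x ∈ opoly a d := by
        intro j
        have h1 := hw j
        have h2 := hx j
        simp only [map_add, map_smul, smul_eq_mul]
        nlinarith
      have h3 : a i ((1 - θ) • w + θ • x) ∈ Ioo e₀ e₁ := he ▸ mem_image_of_mem _ hmem
      have h4 := h3.2
      simp only [map_add, map_smul, smul_eq_mul, hwi] at h4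
      have h5 : θ * (d i - a i x) ≤ ε := by
        rw [hθ, div_mul_eq_mul_div, div_le_iff₀ (by linarith)]
        nlinarith
      linarith
  have ha₁ := htop c z a₀ a₁ hA.lt hne hz hzi hU
  have hb₁ := htop c' z' b₀ b₁ hB.lt hne' hz' hzi' hU'
  have key := hA.prekopa_gain hB (S.A_nonneg ((1 / 2 : ℝ) • (c + c'))) (S.integrable_A ha _) (by
      intro s _ r _
      have := pvol_mul_le m (S.posSpan ha) (c - s • S.b a) (c' - r • S.b a)
      have he : (1 / 2 : ℝ) • (c - s • S.b a + (c' - r • S.b a)) =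
          (1 / 2 : ℝ) • (c + c') - ((s + r) / 2) • S.b a := by module
      rw [he] at this
      exact this) hK (hcK a₀ a₁ hU) (hcK' b₀ b₁ hU')
  rw [S.intervalIntegral_A_eq hA.lt.le hU, S.intervalIntegral_A_eq hB.lt.le hU',
    S.intervalIntegral_eq hA.lt.le hU (fun s => s),
    S.intervalIntegral_eq hB.lt.le hU' (fun s => s), ← S.apply_bary ha, ← S.apply_bary ha] at key
  rw [← ha₁, ← hb₁, S.pvol_eq ha c, S.pvol_eq ha c', S.pvol_eq ha ((1 / 2 : ℝ) • (c + c')),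
    mul_mul_mul_comm, ← sq, Real.sqrt_mul (sq_nonneg _), Real.sqrt_sq S.κ_pos.le, mul_assoc]
  exact mul_le_mul_of_nonneg_left key S.κ_pos.le

end Slicing

end

/-! ### Lower bounds for slice volumes near a facet -/

section

open MeasureTheory Set Filter Topology Asymptotics
set_option linter.unusedSectionVars false

variable {ι : Type*} [Fintype ι] {E : Type*} [NormedAddCommGroup E]
  [NormedSpace ℝ E] [FiniteDimensional ℝ E] [MeasurableSpace E] [BorelSpace E]
  {μ : Measure E} [μ.IsAddHaarMeasure] {m : ℕ} {a : ι → E →L[ℝ] ℝ}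

namespace Slicing

/-- For right-hand sides near `1`, the volume of the part of the polytope below level `s` is
bounded by a constant multiple of the slice volume at level `s`. Near the top facet the slice
contains a fixed ball; lower slices contain a scaled copy of every slice below them, because the
polytope contains the cone over that slice with apex near the top facet. -/
lemma exists_cdf_le {i : ι} (S : Slicing μ (a i) m) (ha : PosSpan a) {z : E} (hzi : a i z = 1)
    (hz : ∀ j, j ≠ i → a j z < 1) :
    ∃ δ K : ℝ, 0 < δ ∧ 0 < K ∧ ∀ c : ι → ℝ, ‖c - 1‖ < δ → ∀ a₀ a₁,
      a i '' opoly a c = Ioo a₀ a₁ → ∀ s ∈ Ioo a₀ a₁,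
        ∫ t in a₀..s, S.A a c t ≤ K * S.A a c s := by
  obtain ⟨⟨s₀, yz⟩, rfl⟩ := S.L.surjective z
  obtain rfl : s₀ = 1 := by rw [S.apply_L] at hzi; exact hzi
  -- a product neighbourhood on which all constraints but the `i`-th hold
  obtain ⟨r, hr, hr1, hnear⟩ : ∃ r : ℝ, 0 < r ∧ r ≤ 1 ∧ ∀ (s : ℝ) (y : Fin m → ℝ) (c : ι → ℝ),
      |s - 1| ≤ 2 * r → ‖y - yz‖ ≤ r → ‖c - 1‖ ≤ r → ∀ j, j ≠ i → a j (S.L (s, y)) < c j := by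
    have hev : ∀ᶠ q : (ℝ × (Fin m → ℝ)) × (ι → ℝ) in 𝓝 ((1, yz), 1),
        ∀ j, j ≠ i → a j (S.L q.1) < q.2 j := by
      rw [eventually_all]
      intro j
      by_cases hj : j = i
      · exact Eventually.of_forall fun q h => absurd hj h
      · have hc1 : Continuous fun q : (ℝ × (Fin m → ℝ)) × (ι → ℝ) => a j (S.L q.1) := by fun_prop
        have hc2 : Continuous fun q : (ℝ × (Fin m → ℝ)) × (ι → ℝ) => q.2 j := by fun_prop
        filter_upwards [hc1.continuousAt.eventually_lt hc2.continuousAt (hz j hj)] with q hq _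
        exact hq
    obtain ⟨ε, hε, hball⟩ := Metric.eventually_nhds_iff_ball.1 hev
    refine ⟨min (ε / 4) 1, by positivity, min_le_right _ _, fun s y c hs hy hc => ?_⟩
    have h4 : min (ε / 4) 1 ≤ ε / 4 := min_le_left _ _
    refine hball ((s, y), c) ?_
    rw [Metric.mem_ball, Prod.dist_eq, max_lt_iff, Prod.dist_eq, max_lt_iff, dist_eq_norm,
      dist_eq_norm, dist_eq_norm, Real.norm_eq_abs]
    exact ⟨⟨by linarith, by linarith⟩, by linarith⟩
  obtain ⟨K₀, hK₀, hsub⟩ := ha.opoly_subset_closedBall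
  obtain ⟨K₁, hK₁, hsub₁⟩ := (S.posSpan ha).opoly_subset_closedBall
  set B := ‖(1 : ι → ℝ)‖ + 1 with hB
  have hBpos : 0 < B := by positivity
  set W := ‖a i‖ * (K₀ * B) + 1 with hW
  have hW1 : 1 ≤ W := by rw [hW]; have : 0 ≤ ‖a i‖ * (K₀ * B) := by positivity
                         linarith
  have hcB : ∀ c : ι → ℝ, ‖c - 1‖ < r → ‖c‖ ≤ B := fun c hc => by
    have : ‖c‖ ≤ ‖c - 1‖ + ‖(1 : ι → ℝ)‖ := by simpa using norm_add_le (c - 1) 1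
    linarith
  have hWbd : ∀ c : ι → ℝ, ‖c - 1‖ < r → a i '' opoly a c ⊆ Icc (-W) W := by
    rintro c hc _ ⟨x, hx, rfl⟩
    have h1 : ‖x‖ ≤ K₀ * ‖c‖ := by simpa using hsub c hx
    have h2 : ‖a i x‖ ≤ W := by
      calc ‖a i x‖ ≤ ‖a i‖ * ‖x‖ := (a i).le_opNorm x
        _ ≤ ‖a i‖ * (K₀ * B) := by
          have := hcB c hc
          gcongr
          exact h1.trans (by gcongr)
        _ ≤ W := by rw [hW]; linarith
    exact abs_le.1 h2
  set α := (volume : Measure (Fin m → ℝ)).real (Metric.ball yz r) with hα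
  have hαpos : 0 < α := ENNReal.toReal_pos (Metric.measure_ball_pos _ _ hr).ne' measure_ball_lt_top.ne
  set M := (volume : Measure (Fin m → ℝ)).real
    (Metric.closedBall 0 (K₁ * (B + W * ‖S.b a‖))) with hM
  have hMnn : 0 ≤ M := measureReal_nonneg
  set ρ₀ := r / (2 * W) with hρ₀
  have hρ₀pos : 0 < ρ₀ := by positivity
  set K₂ := M / α + (ρ₀ ^ m)⁻¹ with hK₂
  have hK₂pos : 0 < K₂ := by positivity
  have hslice : ∀ c : ι → ℝ, ‖c - 1‖ < r → ∀ t s, t ≤ s → s < c i →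
      S.A a c t ≤ K₂ * S.A a c s := by
    intro c hc t s hts hsc
    by_cases ht : t ∈ a i '' opoly a c
    swap
    · rw [S.A_of_notMem ht]; exact mul_nonneg hK₂pos.le (S.A_nonneg c s)
    have hci : |c i - 1| < r := (norm_le_pi_norm (c - 1) i).trans_lt hc
    rw [abs_lt] at hci
    have hmem : ∀ s, 1 - 2 * r ≤ s → s < c i → Metric.ball yz r ⊆
        opoly (S.rest a) (c - s • S.b a) := by
      intro s hs hsc y hy
      rw [← S.mem_opoly_iff]
      intro j
      by_cases hj : j = i
      · rw [hj, S.apply_L]; exact hsc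
      · exact hnear s y c (by rw [abs_le]; constructor <;> linarith)
          (by rw [← dist_eq_norm]; exact (Metric.mem_ball.1 hy).le) hc.le j hj
    have hAt := S.A_nonneg (a := a) c t
    have hAs := S.A_nonneg (a := a) c s
    rcases le_or_gt (1 - 2 * r) s with hs | hs
    · have h1 : α ≤ S.A a c s := (S.posSpan ha).pvol_mono (hmem s hs hsc)
      have h2 : S.A a c t ≤ M := by
        refine measureReal_mono ((hsub₁ _).trans (Metric.closedBall_subset_closedBall ?_))
          measure_closedBall_lt_top.ne
        gcongr
        have ht' : |t| ≤ W := abs_le.2 (hWbd c hc ht)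
        calc ‖c - t • S.b a‖ ≤ ‖c‖ + ‖t • S.b a‖ := norm_sub_le _ _
          _ = ‖c‖ + |t| * ‖S.b a‖ := by rw [norm_smul, Real.norm_eq_abs]
          _ ≤ B + W * ‖S.b a‖ := by
            have := hcB c hc
            gcongr
      calc S.A a c t ≤ M := h2
        _ = M / α * α := by field_simp
        _ ≤ M / α * S.A a c s := by gcongr
        _ ≤ K₂ * S.A a c s := by rw [hK₂]; gcongr; simp; positivity
    · set s₁ := 1 - r with hs₁
      have hd : 0 < s₁ - t := by linarith
      set ρ := (s₁ - s) / (s₁ - t) with hρ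
      have hρpos : 0 < ρ := div_pos (by linarith) hd
      have hρ1 : ρ ≤ 1 := by rw [hρ, div_le_one hd]; linarith
      have hρle : ρ₀ ≤ ρ := by
        have := (hWbd c hc ht).1
        rw [hρ₀, hρ]
        exact div_le_div₀ (by linarith) (by linarith) hd (by linarith)
      have hs_eq : s = ρ * t + (1 - ρ) * s₁ := by
        rw [hρ]; field_simp; ring
      have hz₁ := (S.mem_opoly_iff a c s₁ yz).2
        (hmem s₁ (by linarith) (by linarith) (Metric.mem_ball_self hr))
      have hincl : AffineMap.homothety yz ρ '' opoly (S.rest a) (c - t • S.b a) ⊆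
          opoly (S.rest a) (c - s • S.b a) := by
        rintro _ ⟨y, hy, rfl⟩
        rw [← S.mem_opoly_iff] at hy ⊢
        have h1 : S.L (s, AffineMap.homothety yz ρ y) =
            ρ • S.L (t, y) + (1 - ρ) • S.L (s₁, yz) := by
          rw [← map_smul, ← map_smul, ← map_add]
          congr 1
          ext k
          · simpa using hs_eq
          · simp [AffineMap.homothety_apply]; ring
        rw [h1]
        intro j
        have h2 := hy j
        have h3 := hz₁ j
        simp only [map_add, map_smul, smul_eq_mul]
        nlinarith
      have h4 := (S.posSpan ha).pvol_mono (μ := volume) hincl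
      have h5 : (volume : Measure (Fin m → ℝ)).real
          (AffineMap.homothety yz ρ '' opoly (S.rest a) (c - t • S.b a)) =
          ρ ^ m * S.A a c t := by
        rw [measureReal_def, Measure.addHaar_image_homothety, ENNReal.toReal_mul,
          ENNReal.toReal_ofReal (abs_nonneg _), abs_of_nonneg (by positivity)]
        simp [A, pvol, measureReal_def]
      rw [h5] at h4
      have h6 : ρ₀ ^ m * S.A a c t ≤ S.A a c s := le_trans (by gcongr) h4
      calc S.A a c t = (ρ₀ ^ m)⁻¹ * (ρ₀ ^ m * S.A a c t) := by field_simp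
        _ ≤ (ρ₀ ^ m)⁻¹ * S.A a c s := by gcongr
        _ ≤ K₂ * S.A a c s := by rw [hK₂]; gcongr; simp; positivity
  refine ⟨r, K₂ * (2 * W), hr, by positivity, fun c hc a₀ a₁ hU s hs => ?_⟩
  have hIcc : Icc a₀ a₁ ⊆ Icc (-W) W := by
    rw [← closure_Ioo (hs.1.trans hs.2).ne, ← hU]
    exact closure_minimal (hWbd c hc) isClosed_Icc
  have hsc : s < c i := by
    rw [← hU] at hs
    obtain ⟨x, hx, rfl⟩ := hs
    exact hx i
  have h1 := intervalIntegral.norm_integral_le_of_norm_le_const (a := a₀) (b := s)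
    (f := S.A a c) (C := K₂ * S.A a c s) (by
      intro t ht
      rw [uIoc_of_le hs.1.le] at ht
      rw [Real.norm_of_nonneg (S.A_nonneg c t)]
      exact hslice c hc t s ht.2 hsc)
  have h2 := (hIcc (left_mem_Icc.2 (hs.1.trans hs.2).le)).1
  have h3 := (hIcc (Ioo_subset_Icc_self hs)).2
  calc ∫ t in a₀..s, S.A a c t ≤ _ := le_abs_self _
    _ ≤ K₂ * S.A a c s * |s - a₀| := h1
    _ ≤ K₂ * S.A a c s * (2 * W) := by
      have := S.A_nonneg (a := a) c s
      rw [abs_of_nonneg (by linarith [hs.1])]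
      gcongr
      linarith
    _ = _ := by ring

end Slicing

end

/-! ### The kernel of the Hessian of the volume -/

section

open MeasureTheory Set Filter Topology Asymptotics
set_option linter.unusedSectionVars false

variable {ι : Type*} [Fintype ι] [DecidableEq ι] {E : Type*} [NormedAddCommGroup E]
  [NormedSpace ℝ E] [FiniteDimensional ℝ E] [MeasurableSpace E] [BorelSpace E]
  {μ : Measure E} [μ.IsAddHaarMeasure] {m : ℕ} {a : ι → E →L[ℝ] ℝ}

open scoped Pointwise in
lemma pvol_smul (c : ι → ℝ) {t : ℝ} (ht : 0 < t) :
    pvol μ a (t • c) = t ^ Module.finrank ℝ E * pvol μ a c := by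
  have h : opoly a (t • c) = t • opoly a c := by
    ext x
    rw [Set.mem_smul_set_iff_inv_smul_mem₀ ht.ne', mem_opoly, mem_opoly]
    refine forall_congr' fun j => ?_
    rw [map_smul, smul_eq_mul, Pi.smul_apply, smul_eq_mul, inv_mul_lt_iff₀ ht]
  rw [pvol, h, measureReal_def, Measure.addHaar_smul, ENNReal.toReal_mul,
    ENNReal.toReal_ofReal (abs_nonneg _), abs_of_pos (by positivity)]
  rfl

variable {G : ι → (ι → ℝ) → ℝ}

/-- Euler's relation for the volume, which is homogeneous of degree `dim E` in the right-hand
sides. -/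
lemma IsFacetVolume.euler (hG : IsFacetVolume μ m a G) (ha : PosSpan a) {c : ι → ℝ}
    (hs : SimpleAt a c) : ∑ i, G i c * c i = Module.finrank ℝ E * pvol μ a c := by
  have h1 : HasDerivAt (fun t : ℝ => t • c) c 1 := by
    simpa using (hasDerivAt_id (1 : ℝ)).smul_const c
  have h2 := (by simpa using hG.hasFDerivAt ha hs :
    HasFDerivAt (pvol μ a) (∑ i, G i c • (ContinuousLinearMap.proj i : (ι → ℝ) →L[ℝ] ℝ))
      ((1 : ℝ) • c)).comp_hasDerivAt (1 : ℝ) h1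
  have h3 : HasDerivAt (fun t : ℝ => t ^ Module.finrank ℝ E * pvol μ a c)
      (Module.finrank ℝ E * pvol μ a c) 1 := by
    simpa using (hasDerivAt_pow (Module.finrank ℝ E) (1 : ℝ)).mul_const (pvol μ a c)
  have h4 : (pvol μ a ∘ fun t : ℝ => t • c) =ᶠ[𝓝 1]
      fun t : ℝ => t ^ Module.finrank ℝ E * pvol μ a c := by
    filter_upwards [lt_mem_nhds (zero_lt_one' ℝ)] with t ht
    exact pvol_smul c ht
  have h5 := (h3.congr_of_eventuallyEq h4).unique h2
  simpa using h5.symm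

/-- A variation `x` of the right-hand sides that does not change the facet volumes to first order
does not change the volume to first order either. -/
lemma IsFacetVolume.sum_eq_zero (hG : IsFacetVolume μ m a G) (ha : PosSpan a)
    (hs : SimpleAt a 1) (hd : ∀ i, DifferentiableAt ℝ (G i) 1) (hE : 2 ≤ Module.finrank ℝ E)
    {x : ι → ℝ} (hx : ∀ i, fderiv ℝ (G i) 1 x = 0) : ∑ i, G i 1 * x i = 0 := by
  have h1 : HasFDerivAt (fun c : ι → ℝ => ∑ i, G i c * c i)
      (∑ i, (G i 1 • (ContinuousLinearMap.proj i : (ι → ℝ) →L[ℝ] ℝ) +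
        (1 : ι → ℝ) i • fderiv ℝ (G i) 1)) 1 :=
    HasFDerivAt.fun_sum fun i _ => (hd i).hasFDerivAt.mul (hasFDerivAt_apply i 1)
  have h2 := (hG.hasFDerivAt ha hs).const_mul (Module.finrank ℝ E : ℝ)
  have h3 : (fun c : ι → ℝ => ∑ i, G i c * c i) =ᶠ[𝓝 1]
      fun c => Module.finrank ℝ E * pvol μ a c := by
    filter_upwards [hs.eventually] with c hc using hG.euler ha hc
  have h4 := congrArg (fun L : (ι → ℝ) →L[ℝ] ℝ => L x)
    (h1.unique (h2.congr_of_eventuallyEq h3))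
  simp [hx] at h4
  have h5 : (2 : ℝ) ≤ Module.finrank ℝ E := by exact_mod_cast hE
  have h6 : ((Module.finrank ℝ E : ℝ) - 1) * ∑ i, G i 1 * x i = 0 := by
    linear_combination -h4
  exact (mul_eq_zero.1 h6).resolve_left (by linarith)

/-- Along such a variation the volume is constant up to second order. -/
lemma IsFacetVolume.abs_pvol_sub_le (hG : IsFacetVolume μ m a G) (ha : PosSpan a)
    (hs : SimpleAt a 1) (hd : ∀ i, DifferentiableAt ℝ (G i) 1)
    {x : ι → ℝ} (hx : ∀ i, fderiv ℝ (G i) 1 x = 0) (h0 : ∑ i, G i 1 * x i = 0)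
    {η : ℝ} (hη : 0 < η) :
    ∀ᶠ ε : ℝ in 𝓝 0, |pvol μ a (1 + ε • x) - pvol μ a 1| ≤ η * ε ^ 2 := by
  have hline : ∀ ε : ℝ, HasDerivAt (fun ε : ℝ => 1 + ε • x) x ε := fun ε => by
    simpa using ((hasDerivAt_id ε).smul_const x).const_add 1
  have hcont : Tendsto (fun ε : ℝ => 1 + ε • x) (𝓝 0) (𝓝 1) := by
    simpa using (hline 0).continuousAt.tendsto
  have hh : ∀ᶠ ε : ℝ in 𝓝 0, HasDerivAt (fun ε : ℝ => pvol μ a (1 + ε • x))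
      (∑ i, G i (1 + ε • x) * x i) ε := by
    filter_upwards [hcont.eventually hs.eventually] with ε hε
    have h1 := (hG.hasFDerivAt ha hε).comp_hasDerivAt ε (hline ε)
    simp only [sum_apply, smul_apply, ContinuousLinearMap.proj_apply, smul_eq_mul] at h1
    exact h1
  have hg : HasDerivAt (fun ε : ℝ => ∑ i, G i (1 + ε • x) * x i) 0 0 := by
    have h1 : ∀ i ∈ Finset.univ, HasDerivAt (fun ε : ℝ => G i (1 + ε • x) * x i) 0 0 := by
      intro i _
      have h2 := (by simpa using (hd i).hasFDerivAt :
        HasFDerivAt (G i) (fderiv ℝ (G i) 1) (1 + (0 : ℝ) • x)).comp_hasDerivAt 0 (hline 0)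
      simpa [hx i] using h2.mul_const (x i)
    simpa using HasDerivAt.fun_sum h1
  have hsmall : ∀ᶠ ε : ℝ in 𝓝 0, |∑ i, G i (1 + ε • x) * x i| ≤ η * |ε| := by
    have := (hasDerivAt_iff_isLittleO.1 hg).def hη
    simpa [h0] using this
  obtain ⟨ρ, hρ, hball⟩ := Metric.eventually_nhds_iff_ball.1 (hh.and hsmall)
  filter_upwards [Metric.ball_mem_nhds 0 hρ] with ε hε
  have hsub : ∀ t ∈ uIcc 0 ε, |t| ≤ |ε| := fun t ht => by
    simpa using abs_sub_left_of_mem_uIcc ht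
  have hin : ∀ t ∈ uIcc 0 ε, t ∈ Metric.ball (0 : ℝ) ρ := fun t ht => by
    simp only [Metric.mem_ball, dist_zero_right, Real.norm_eq_abs] at hε ⊢
    exact (hsub t ht).trans_lt hε
  have := (convex_uIcc (0 : ℝ) ε).norm_image_sub_le_of_norm_hasDerivWithin_le
    (f := fun ε : ℝ => pvol μ a (1 + ε • x)) (C := η * |ε|)
    (fun t ht => (hball t (hin t ht)).1.hasDerivWithinAt)
    (fun t ht => (hball t (hin t ht)).2.trans (by have := hsub t ht; gcongr))
    left_mem_uIcc right_mem_uIcc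
  simpa [mul_assoc, ← sq, Real.norm_eq_abs] using this

/-- The infinitesimal equality case of the Brunn–Minkowski inequality: a variation of the
right-hand sides that does not change the facet volumes to first order comes from a translation,
and the translation is the derivative of the barycentre. -/
theorem IsFacetVolume.exists_translation (hG : IsFacetVolume μ m a G) (ha : PosSpan a)
    (hE : Module.finrank ℝ E = m + 1) (hm : 1 ≤ m)
    (hs : SimpleAt a 1) (hd : ∀ i, DifferentiableAt ℝ (G i) 1)
    (hz : ∀ i, ∃ z, a i z = 1 ∧ ∀ j, j ≠ i → a j z < 1)
    {x : ι → ℝ} (hx : ∀ i, fderiv ℝ (G i) 1 x = 0) : ∃ w : E, ∀ i, a i w = x i := by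
  have h0 := hG.sum_eq_zero ha hs hd (by omega) hx
  have hcont : Tendsto (fun ε : ℝ => 1 + ε • x) (𝓝 0) (𝓝 1) := by
    have : Continuous fun ε : ℝ => 1 + ε • x := by fun_prop
    simpa using this.tendsto 0
  have hne : ∀ᶠ c : ι → ℝ in 𝓝 1, (opoly a c).Nonempty := by
    have h1 : ∀ᶠ c : ι → ℝ in 𝓝 1, ∀ j, 0 < c j := by
      rw [eventually_all]
      intro j
      exact (continuous_apply j).continuousAt.eventually (lt_mem_nhds one_pos)
    filter_upwards [h1] with c hc
    exact ⟨0, fun j => by simpa using hc j⟩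
  have hA : 0 < pvol μ a 1 := ha.pvol_pos hne.self_of_nhds
  set A := pvol μ a 1 with hAdef
  have hlim : ∀ i, Tendsto (fun ε : ℝ => a i (ε⁻¹ • (bary μ a (1 + ε • x) - bary μ a 1)))
      (𝓝[≠] 0) (𝓝 (x i)) := by
    intro i
    obtain ⟨z, hzi, hzj⟩ := hz i
    have hai : a i ≠ 0 := by rintro h; rw [h] at hzi; simp at hzi
    obtain ⟨S⟩ := Slicing.nonempty (μ := μ) hE hai
    obtain ⟨δ, K, hδ, hK, hcdf⟩ := S.exists_cdf_le ha hzi hzj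
    rw [Metric.tendsto_nhds]
    intro θ hθ
    set η := θ ^ 2 * A / (64 * K ^ 2) with hη
    have hηpos : 0 < η := by positivity
    have hvar := hG.abs_pvol_sub_le ha hs hd hx h0 hηpos
    have hhalf : Tendsto (fun ε : ℝ => ε / 2) (𝓝 0) (𝓝 0) := by
      have : Continuous fun ε : ℝ => ε / 2 := by fun_prop
      simpa using this.tendsto 0
    have hsm : ∀ᶠ ε : ℝ in 𝓝 0, η * ε ^ 2 < A / 2 := by
      have h1 : Continuous fun ε : ℝ => η * ε ^ 2 := by fun_prop
      exact h1.continuousAt.eventually (gt_mem_nhds (by simpa using hA))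
    have htop : ∀ᶠ ε : ℝ in 𝓝 0, ∀ j, a j ((1 + ε * x i) • z) ≤ (1 + ε • x) j := by
      rw [eventually_all]
      intro j
      rcases eq_or_ne j i with rfl | hj
      · exact Eventually.of_forall fun ε => by simp [hzi]
      · have h1 : Continuous fun ε : ℝ => a j ((1 + ε * x i) • z) := by fun_prop
        have h2 : Continuous fun ε : ℝ => (1 + ε • x) j := by fun_prop
        filter_upwards [h1.continuousAt.eventually_lt h2.continuousAt
          (by simpa using hzj j hj)] with ε hε using hε.le
    have hnear : ∀ᶠ ε : ℝ in 𝓝 0, ‖(1 + ε • x) - 1‖ < δ := by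
      have := hcont.eventually (Metric.ball_mem_nhds 1 hδ)
      simpa [dist_eq_norm] using this
    filter_upwards [self_mem_nhdsWithin, nhdsWithin_le_nhds hvar,
      nhdsWithin_le_nhds (hhalf.eventually hvar), nhdsWithin_le_nhds hsm,
      nhdsWithin_le_nhds htop, nhdsWithin_le_nhds hnear,
      nhdsWithin_le_nhds (hcont.eventually hne)] with ε hε0 h1 h2 h3 h4 h5 h6
    have hε0 : ε ≠ 0 := hε0
    have hgain := S.pvol_gain ha (c := 1) (c' := 1 + ε • x) (z := z) (z' := (1 + ε * x i) • z)
      hne.self_of_nhds h6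
      (fun j => by
        rcases eq_or_ne j i with rfl | hj
        · exact hzi.le
        · exact (hzj j hj).le) h4 hzi (by simp [hzi]) hK
      (hcdf 1 (by simpa using hδ)) (hcdf _ h5)
    have hmid : (1 / 2 : ℝ) • ((1 : ι → ℝ) + (1 + ε • x)) = 1 + (ε / 2) • x := by
      ext j; simp; ring
    rw [hmid, ← hAdef] at hgain
    set B := pvol μ a (1 + ε • x)
    set C := pvol μ a (1 + (ε / 2) • x)
    set q := (((1 + ε • x) i - (1 : ι → ℝ) i) -
      (a i (bary μ a (1 + ε • x)) - a i (bary μ a 1))) with hq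
    have hε2 : 0 < ε ^ 2 := by positivity
    have hs1 : A - η * ε ^ 2 ≤ √(A * B) := by
      refine Real.le_sqrt_of_sq_le ?_
      have := abs_le.1 h1
      nlinarith [mul_pos hηpos hε2]
    have hC : C ≤ A + η * ε ^ 2 := by
      have := abs_le.1 h2
      nlinarith [mul_pos hηpos hε2]
    have hq2 : q ^ 2 ≤ θ ^ 2 * ε ^ 2 / 2 := by
      have h7 : q ^ 2 / (8 * K ^ 2) * (A / 2) ≤ 2 * (η * ε ^ 2) := by
        have : 0 ≤ q ^ 2 / (8 * K ^ 2) := by positivity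
        nlinarith
      have h8 : q ^ 2 / (8 * K ^ 2) * (A / 2) = q ^ 2 * (A / (16 * K ^ 2)) := by
        field_simp; ring
      have h9 : 2 * (η * ε ^ 2) = (θ ^ 2 * ε ^ 2 / 2) * (A / (16 * K ^ 2)) := by
        rw [hη]; field_simp; ring
      rw [h8, h9] at h7
      exact le_of_mul_le_mul_right h7 (by positivity)
    have hlt : |q| < θ * |ε| := by
      refine abs_lt_of_sq_lt_sq ?_ (by positivity)
      rw [mul_pow, sq_abs]
      nlinarith [mul_pos (pow_pos hθ 2) hε2]
    have hqe : a i (ε⁻¹ • (bary μ a (1 + ε • x) - bary μ a 1)) - x i = -(ε⁻¹ * q) := by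
      rw [hq]; simp; field_simp; ring
    rw [Real.dist_eq, hqe, abs_neg, abs_mul, abs_inv, inv_mul_lt_iff₀ (abs_pos.2 hε0), mul_comm]
    exact hlt
  let Φ : E →ₗ[ℝ] (ι → ℝ) := LinearMap.pi fun i => (a i : E →ₗ[ℝ] ℝ)
  have hcl : IsClosed (LinearMap.range Φ : Set (ι → ℝ)) := Submodule.closed_of_finiteDimensional _
  have hmem : x ∈ (LinearMap.range Φ : Set (ι → ℝ)) :=
    hcl.mem_of_tendsto (tendsto_pi_nhds.2 hlim)
      (Eventually.of_forall fun ε => ⟨ε⁻¹ • (bary μ a (1 + ε • x) - bary μ a 1), rfl⟩)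
  obtain ⟨w, hw⟩ := hmem
  exact ⟨w, fun i => congrFun hw i⟩

end

/-! ### Vertices and edges of a polytope -/

section

open MeasureTheory Set Filter Topology Asymptotics
open scoped RealInnerProductSpace
set_option linter.unusedSectionVars false

variable {ι : Type*} [Fintype ι] {E : Type*} [NormedAddCommGroup E]
  [InnerProductSpace ℝ E] [FiniteDimensional ℝ E]

/-- `v` lists the vertices of the polytope `P`, without repetition, and `0` is an interior point
of `P`. -/
structure IsVertexList (v : ι → E) (P : Set E) : Prop where
  eq : P = convexHull ℝ (range v)
  inj : Function.Injective v
  ext : range v = extremePoints ℝ P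
  zero_mem : (0 : E) ∈ interior P

namespace IsVertexList
variable {v : ι → E} {P : Set E} (h : IsVertexList v P)
include h

lemma mem (i : ι) : v i ∈ P := extremePoints_subset (h.ext ▸ mem_range_self i)

lemma convex : Convex ℝ P := h.eq ▸ convex_convexHull ℝ _

lemma eq_of_openSegment {i : ι} {x y : E} (hx : x ∈ P) (hy : y ∈ P)
    (hi : v i ∈ openSegment ℝ x y) : x = v i :=
  (mem_extremePoints_iff_left.1 (h.ext ▸ mem_range_self i : v i ∈ extremePoints ℝ P)).2 x hx y hy hi

lemma subset_of_forall {s : Set E} (hs : Convex ℝ s) (hv : ∀ i, v i ∈ s) : P ⊆ s := by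
  rw [h.eq]
  exact convexHull_min (range_subset_iff.2 hv) hs

lemma inner_le {u : E} {t : ℝ} (hu : ∀ j, ⟪v j, u⟫ ≤ t) {p : E} (hp : p ∈ P) : ⟪p, u⟫ ≤ t := by
  refine h.subset_of_forall (s := {p | ⟪p, u⟫ ≤ t}) ?_ hu hp
  exact convex_halfSpace_le ⟨fun x y => inner_add_left x y u, fun c x => real_inner_smul_left x u c⟩ t

lemma exists_smul_mem (x : E) : ∃ ε : ℝ, 0 < ε ∧ ε • x ∈ P ∧ -(ε • x) ∈ P := by
  have h1 : Continuous fun ε : ℝ => ε • x := by fun_prop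
  have h2 : ∀ᶠ ε : ℝ in 𝓝 0, ε • x ∈ P :=
    h1.continuousAt.eventually (by simpa using mem_interior_iff_mem_nhds.1 h.zero_mem)
  have h3 : ∀ᶠ ε : ℝ in 𝓝 0, -(ε • x) ∈ P :=
    h1.neg.continuousAt.eventually (by simpa using mem_interior_iff_mem_nhds.1 h.zero_mem)
  have h4 : ∀ᶠ ε : ℝ in 𝓝[>] 0, 0 < ε := self_mem_nhdsWithin
  obtain ⟨ε, hε⟩ := (h4.and ((h2.and h3).filter_mono nhdsWithin_le_nhds)).exists
  exact ⟨ε, hε⟩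

lemma eq_zero_of_inner_nonpos {x : E} (hx : ∀ j, ⟪v j, x⟫ ≤ 0) : x = 0 := by
  obtain ⟨ε, hε, hm, -⟩ := h.exists_smul_mem x
  have h1 := h.inner_le hx hm
  rw [real_inner_smul_left] at h1
  by_contra hne
  have := real_inner_self_pos.2 hne
  nlinarith

lemma ne_zero [Nontrivial E] (i : ι) : v i ≠ 0 := by
  intro hi
  obtain ⟨x, hx⟩ := exists_ne (0 : E)
  obtain ⟨ε, hε, h1, h2⟩ := h.exists_smul_mem x
  have h3 : v i ∈ openSegment ℝ (ε • x) (-(ε • x)) :=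
    ⟨1 / 2, 1 / 2, by norm_num, by norm_num, by norm_num, by rw [hi]; simp⟩
  have h4 := h.eq_of_openSegment h1 h2 h3
  rw [hi] at h4
  exact (smul_ne_zero hε.ne' hx) h4

/-- No three vertices are collinear. -/
lemma not_collinear {i j k : ι} (hik : i ≠ k) (hjk : j ≠ k) (t : ℝ) :
    v k ≠ t • v j + (1 - t) • v i := by
  intro hk
  rcases lt_trichotomy t 0 with ht | rfl | ht
  · have h1 : v i ∈ openSegment ℝ (v k) (v j) := by
      refine ⟨1 / (1 - t), -t / (1 - t), by apply div_pos <;> linarith,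
        by apply div_pos <;> linarith, by field_simp [show 1 - t ≠ 0 by linarith]; ring, ?_⟩
      have : 1 - t ≠ 0 := by linarith
      rw [hk]
      match_scalars <;> field_simp; ring
    exact hik (h.inj (h.eq_of_openSegment (h.mem k) (h.mem j) h1).symm)
  · exact hik (h.inj (by simpa using hk.symm))
  · rcases lt_trichotomy t 1 with ht1 | rfl | ht1
    · exact hjk (h.inj (h.eq_of_openSegment (h.mem j) (h.mem i)
        ⟨t, 1 - t, ht, by linarith, by ring, hk.symm⟩))
    · exact hjk (h.inj (by simpa using hk.symm))
    · have h1 : v j ∈ openSegment ℝ (v k) (v i) := by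
        refine ⟨1 / t, (t - 1) / t, by positivity, div_pos (by linarith) ht,
          by field_simp; ring, ?_⟩
        rw [hk]
        match_scalars <;> field_simp; ring
      exact hjk (h.inj (h.eq_of_openSegment (h.mem k) (h.mem i) h1).symm)

lemma exists_exposing (i : ι) : ∃ u : E, ∀ j, j ≠ i → ⟪v j, u⟫ < ⟪v i, u⟫ := by
  have h1 := (h.convex.mem_extremePoints_iff_mem_sdiff_convexHull_sdiff).1
    (h.ext ▸ mem_range_self i : v i ∈ extremePoints ℝ P)
  have hfin : (v '' {j | j ≠ i}).Finite := toFinite _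
  have h2 : v i ∉ convexHull ℝ (v '' {j | j ≠ i}) := by
    refine fun hm => h1.2 (convexHull_mono ?_ hm)
    rintro _ ⟨j, hj, rfl⟩
    exact ⟨h.mem j, fun he => hj (h.inj he)⟩
  obtain ⟨f, t, hf1, hf2⟩ := geometric_hahn_banach_point_closed (convex_convexHull ℝ _)
    (hfin.isClosed_convexHull ℝ) h2
  refine ⟨-(InnerProductSpace.toDual ℝ E).symm f, fun j hj => ?_⟩
  have h3 := hf2 _ (subset_convexHull ℝ _ ⟨j, hj, rfl⟩)
  rw [inner_neg_right, inner_neg_right, real_inner_comm, real_inner_comm _ (v i),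
    InnerProductSpace.toDual_symm_apply, InnerProductSpace.toDual_symm_apply]
  linarith

lemma exists_exposing_one [Nontrivial E] (i : ι) :
    ∃ z : E, ⟪v i, z⟫ = 1 ∧ ∀ j, j ≠ i → ⟪v j, z⟫ < 1 := by
  obtain ⟨u, hu⟩ := h.exists_exposing i
  have hpos : 0 < ⟪v i, u⟫ := by
    by_contra hle
    push Not at hle
    have hu0 : u = 0 := h.eq_zero_of_inner_nonpos fun j => by
      rcases eq_or_ne j i with rfl | hj
      · exact hle
      · exact (hu j hj).le.trans hle
    have hone : ∀ j, j = i := fun j => by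
      by_contra hj
      have := hu j hj
      simp [hu0] at this
    refine h.ne_zero i (neg_eq_zero.1 (h.eq_zero_of_inner_nonpos fun j => ?_))
    rw [hone j, inner_neg_right]
    have := real_inner_self_nonneg (x := v i)
    linarith
  refine ⟨⟪v i, u⟫⁻¹ • u, ?_, fun j hj => ?_⟩
  · rw [real_inner_smul_right, inv_mul_cancel₀ hpos.ne']
  · rw [real_inner_smul_right, inv_mul_lt_iff₀ hpos, mul_one]
    exact hu j hj

/-- The improving step of the simplex method: if `v i` does not maximize a linear functional, the
functional increases along some edge at `v i`. The edges at `v i` are found as the vertices of a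
section `K` (the vertex figure) of the cone of `P` at `v i`. -/
lemma exists_edge {i k : ι} {z : E} (hk : ⟪v i, z⟫ < ⟪v k, z⟫) :
    ∃ j, i ≠ j ∧ IsExtreme ℝ P (segment ℝ (v i) (v j)) ∧ ⟪v i, z⟫ < ⟪v j, z⟫ := by
  obtain ⟨u, hu⟩ := h.exists_exposing i
  set s : ι → ℝ := fun j => ⟪v i - v j, u⟫ with hs
  have hspos : ∀ j, j ≠ i → 0 < s j := fun j hj => by
    simp only [hs, inner_sub_left]
    linarith [hu j hj]
  set p : ι → E := fun j => (s j)⁻¹ • (v j - v i) with hp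
  set K := convexHull ℝ (p '' {j | j ≠ i}) with hK
  have hKc : Convex ℝ K := convex_convexHull ℝ _
  have hki : k ≠ i := by rintro rfl; exact lt_irrefl _ hk
  have hpK : ∀ j, j ≠ i → p j ∈ K := fun j hj => subset_convexHull ℝ _ ⟨j, hj, rfl⟩
  have hpv : ∀ j, j ≠ i → v j = v i + s j • p j := fun j hj => by
    simp only [hp]
    rw [smul_inv_smul₀ (hspos j hj).ne']
    abel
  -- an extreme point of the section on which `z` is positive
  obtain ⟨x, hxK, hxz⟩ : ∃ x ∈ extremePoints ℝ K, 0 < ⟪x, z⟫ := by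
    by_contra! hcon
    have hKcomp : IsCompact K := (toFinite (p '' {j | j ≠ i})).isCompact_convexHull ℝ
    have hsub : K ⊆ {x | ⟪x, z⟫ ≤ 0} := by
      rw [← closure_convexHull_extremePoints hKcomp hKc]
      refine closure_minimal (convexHull_min hcon ?_) (isClosed_le (by fun_prop) (by fun_prop))
      exact convex_halfSpace_le
        ⟨fun x y => inner_add_left x y z, fun c x => real_inner_smul_left x z c⟩ 0
    have h1 : ⟪p k, z⟫ ≤ 0 := hsub (hpK k hki)
    simp only [hp, real_inner_smul_left, inner_sub_left] at h1
    have h2 := mul_pos (inv_pos.2 (hspos k hki)) (sub_pos.2 hk)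
    linarith
  obtain ⟨j, hj, rfl⟩ := extremePoints_convexHull_subset hxK
  have hj : j ≠ i := hj
  -- the polytope is contained in the cone over the section
  have hcone : ∀ y ∈ P, ∃ t : ℝ, 0 ≤ t ∧ ∃ q ∈ K, y = v i + t • q := by
    intro y hy
    refine h.subset_of_forall (s := {y | ∃ t : ℝ, 0 ≤ t ∧ ∃ q ∈ K, y = v i + t • q}) ?_ ?_ hy
    · rintro _ ⟨t₁, ht₁, q₁, hq₁, rfl⟩ _ ⟨t₂, ht₂, q₂, hq₂, rfl⟩ α β hα hβ hαβ
      have hα1 : α = 1 - β := by linarith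
      rcases (add_nonneg (mul_nonneg hα ht₁) (mul_nonneg hβ ht₂)).eq_or_lt with h0 | h0
      · have h1 : α * t₁ = 0 := by nlinarith [mul_nonneg hα ht₁, mul_nonneg hβ ht₂]
        have h2 : β * t₂ = 0 := by nlinarith [mul_nonneg hα ht₁, mul_nonneg hβ ht₂]
        refine ⟨0, le_rfl, q₁, hq₁, ?_⟩
        rw [smul_add, smul_add, smul_smul, smul_smul, h1, h2, hα1]
        module
      · refine ⟨α * t₁ + β * t₂, h0.le, _, hKc hq₁ hq₂
          (div_nonneg (mul_nonneg hα ht₁) h0.le) (div_nonneg (mul_nonneg hβ ht₂) h0.le)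
          (by rw [← add_div, div_self h0.ne']), ?_⟩
        rw [smul_add (α * t₁ + β * t₂), smul_smul, smul_smul, mul_div_cancel₀ _ h0.ne',
          mul_div_cancel₀ _ h0.ne', hα1]
        module
    · intro l
      rcases eq_or_ne l i with rfl | hl
      · exact ⟨0, le_rfl, p k, hpK k hki, by simp⟩
      · exact ⟨s l, (hspos l hl).le, p l, hpK l hl, hpv l hl⟩
  have hKu : ∀ q ∈ K, ⟪q, u⟫ = -1 := by
    intro q hq
    have hconv : Convex ℝ {q : E | ⟪q, u⟫ = -1} := convex_hyperplane
      ⟨fun x y => inner_add_left x y u, fun c x => real_inner_smul_left x u c⟩ (-1)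
    refine convexHull_min ?_ hconv hq
    rintro _ ⟨l, hl, rfl⟩
    have h1 : ⟪v l - v i, u⟫ = -s l := by simp only [hs, inner_sub_left]; ring
    simp only [mem_ofPred_eq, hp, real_inner_smul_left, h1]
    have := (hspos l hl).ne'
    field_simp
  -- points of `P` on the ray from `v i` through `v j` do not lie beyond `v j`
  have hray : ∀ t : ℝ, 0 ≤ t → v i + t • p j ∈ P → v i + t • p j ∈ segment ℝ (v i) (v j) := by
    intro t ht hmem
    have hsj := hspos j hj
    have hle : t ≤ s j := by
      by_contra! hlt
      refine hj (h.inj (h.eq_of_openSegment (h.mem i) hmem ?_)).symm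
      refine ⟨1 - s j / t, s j / t, ?_, div_pos hsj (by linarith), by ring, ?_⟩
      · rw [sub_pos, div_lt_one (by linarith)]; exact hlt
      · rw [hpv j hj, smul_add, smul_smul, div_mul_cancel₀ _ (by linarith)]
        module
    refine ⟨1 - t / s j, t / s j, ?_, by positivity, by ring, ?_⟩
    · rw [sub_nonneg, div_le_one hsj]; exact hle
    · conv_lhs => rw [hpv j hj]
      rw [smul_add, smul_smul, div_mul_cancel₀ _ hsj.ne']
      module
  refine ⟨j, hj.symm, ⟨h.convex.segment_subset (h.mem i) (h.mem j), ?_⟩, ?_⟩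
  · intro y₁ hy₁ y₂ hy₂ w hw hwy
    obtain ⟨t₁, ht₁, q₁, hq₁, rfl⟩ := hcone y₁ hy₁
    obtain ⟨t₂, ht₂, q₂, hq₂, rfl⟩ := hcone y₂ hy₂
    obtain ⟨α, β, hα, hβ, hαβ, rfl⟩ := hwy
    obtain ⟨γ, δ, hγ, hδ, hγδ, hw⟩ := hw
    rcases ht₁.eq_or_lt with rfl | ht₁
    · rw [zero_smul, add_zero]; exact left_mem_segment ℝ _ _
    have hγ1 : γ = 1 - δ := by linarith
    have hα1 : α = 1 - β := by linarith
    have hvec : (δ * s j) • p j = (α * t₁) • q₁ + (β * t₂) • q₂ := by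
      rw [hpv j hj, hγ1, smul_add] at hw
      have : (δ * s j) • p j = α • (v i + t₁ • q₁) + β • (v i + t₂ • q₂) - v i := by
        rw [← hw]; module
      rw [this, hα1]; module
    have hscal : δ * s j = α * t₁ + β * t₂ := by
      have := congrArg (fun x => ⟪x, u⟫) hvec
      simp only [inner_add_left, real_inner_smul_left, hKu _ (hpK j hj), hKu _ hq₁, hKu _ hq₂] at this
      linarith
    have hτ : 0 < α * t₁ + β * t₂ := by positivity
    have hpq : p j = (α * t₁ / (α * t₁ + β * t₂)) • q₁ + (β * t₂ / (α * t₁ + β * t₂)) • q₂ := by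
      rw [hscal] at hvec
      rw [div_eq_inv_mul, div_eq_inv_mul, mul_smul _ (α * t₁), mul_smul _ (β * t₂), ← smul_add, ← hvec,
        inv_smul_smul₀ hτ.ne']
    have hq : q₁ = p j := by
      rcases ht₂.eq_or_lt with rfl | ht₂
      · rw [hpq]
        have : α * t₁ ≠ 0 := by positivity
        simp [this]
      · exact (mem_extremePoints_iff_left.1 hxK).2 q₁ hq₁ q₂ hq₂
          ⟨_, _, by positivity, by positivity, by rw [← add_div, div_self hτ.ne'], hpq.symm⟩
    rw [hq] at hy₁ ⊢
    exact hray t₁ ht₁.le hy₁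
  · rw [hpv j hj, inner_add_left, real_inner_smul_left]
    have := mul_pos (hspos j hj) hxz
    linarith

/-- A vertex and its neighbours span the space. -/
lemma eq_zero_of_inner_adj (i : ι) {z : E} (hi : ⟪v i, z⟫ = 0)
    (hadj : ∀ j, i ≠ j → IsExtreme ℝ P (segment ℝ (v i) (v j)) → ⟪v j, z⟫ = 0) : z = 0 := by
  refine h.eq_zero_of_inner_nonpos fun k => ?_
  by_contra! hk
  obtain ⟨j, hij, hext, hj⟩ := h.exists_edge (hi.trans_lt hk)
  rw [hi, hadj j hij hext] at hj
  exact lt_irrefl _ hj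

end IsVertexList

end

/-! ### The Izmestiev matrix of a polytope -/

section

open MeasureTheory Set Filter Topology Asymptotics
open scoped RealInnerProductSpace
set_option linter.unusedSectionVars false

variable {ι : Type*} [Fintype ι] [DecidableEq ι] {E : Type*} [NormedAddCommGroup E]
  [InnerProductSpace ℝ E] [FiniteDimensional ℝ E] {v : ι → E} {P : Set E}

/-- The linear functionals given by the inner products with the `v i`. -/
noncomputable def dualSys (v : ι → E) (i : ι) : E →L[ℝ] ℝ := innerSL ℝ (v i)

@[simp] lemma dualSys_apply (v : ι → E) (i : ι) (x : E) : dualSys v i x = ⟪v i, x⟫ := rfl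

lemma dualSys_injective {x y : E} (h : innerSL ℝ x = innerSL ℝ y) : x = y := by
  refine ext_inner_right ℝ fun z => ?_
  exact congrArg (fun L : E →L[ℝ] ℝ => L z) h

namespace IsVertexList

lemma posSpan (h : IsVertexList v P) : PosSpan (dualSys v) :=
  fun _ hx => h.eq_zero_of_inner_nonpos hx

lemma simpleAt [Nontrivial E] (h : IsVertexList v P) : SimpleAt (dualSys v) 1 := by
  refine ⟨fun _ _ => one_ne_zero, fun i j _ hij t ht h1 => hij (h.inj ?_)⟩
  have : t = 1 := by simpa using h1.symm
  rw [this, one_smul] at ht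
  exact (dualSys_injective ht).symm

lemma dualSys_not_collinear (h : IsVertexList v P) (i j k : ι) (_hij : i ≠ j) (hik : i ≠ k)
    (hjk : j ≠ k) (t : ℝ) : dualSys v k ≠ t • dualSys v j + (1 - t) • dualSys v i := by
  intro he
  refine h.not_collinear hik hjk t (ext_inner_right ℝ fun z => ?_)
  have := congrArg (fun L : E →L[ℝ] ℝ => L z) he
  simpa [inner_add_left, real_inner_smul_left] using this

variable [MeasurableSpace E] [BorelSpace E]

lemma volume_eq_pvol [Nontrivial E] (h : IsVertexList v P) (c : ι → ℝ) :
    (volume {x : E | ∀ i, ⟪x, v i⟫ ≤ c i}).toReal = pvol volume (dualSys v) c := by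
  refine congrArg ENNReal.toReal (le_antisymm ?_ (measure_mono fun x hx i => ?_))
  · have hnull : volume (⋃ i, {x : E | dualSys v i x = c i}) = 0 := by
      rw [measure_iUnion_null_iff]
      intro i
      refine measure_hyperplane (fun h0 => h.ne_zero i ?_) _
      exact (inner_self_eq_zero (𝕜 := ℝ)).1 (congrArg (fun L : E →L[ℝ] ℝ => L (v i)) h0)
    calc volume {x : E | ∀ i, ⟪x, v i⟫ ≤ c i}
        ≤ volume (opoly (dualSys v) c ∪ ⋃ i, {x : E | dualSys v i x = c i}) := by
          refine measure_mono fun x hx => ?_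
          by_cases hex : ∃ i, dualSys v i x = c i
          · exact Or.inr (mem_iUnion.2 hex)
          · push Not at hex
            refine Or.inl fun i => lt_of_le_of_ne ?_ (hex i)
            rw [dualSys_apply, real_inner_comm]
            exact hx i
      _ ≤ _ := measure_union_le _ _
      _ = _ := by rw [hnull, add_zero]
  · rw [real_inner_comm]
    exact (hx i).le

/-- Every vector in the kernel of the Hessian of the volume consists of the values of a linear
functional at the vertices. -/
theorem exists_inner_eq (h : IsVertexList v P) (hE : 2 ≤ Module.finrank ℝ E)
    {f : (ι → ℝ) → ℝ} (hf : ∀ c, f c = (volume {x : E | ∀ i, ⟪x, v i⟫ ≤ c i}).toReal)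
    {x : ι → ℝ}
    (hx : ∀ j, fderiv ℝ (fun c => fderiv ℝ f c (Pi.single j 1)) (fun _ => 1) x = 0) :
    ∃ w : E, ∀ i, ⟪v i, w⟫ = x i := by
  obtain ⟨m, hm⟩ : ∃ m, Module.finrank ℝ E = (m + 1) + 1 := ⟨Module.finrank ℝ E - 2, by omega⟩
  have : Nontrivial E := Module.nontrivial_of_finrank_pos (R := ℝ) (by omega)
  obtain rfl : f = pvol volume (dualSys v) := funext fun c => (hf c).trans (h.volume_eq_pvol c)
  obtain ⟨G, hG⟩ := exists_isFacetVolume (μ := (volume : Measure E)) hm (dualSys v)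
  refine hG.exists_translation h.posSpan hm (by omega) h.simpleAt
    (hG.differentiableAt h.posSpan h.simpleAt h.dualSys_not_collinear)
    h.exists_exposing_one fun j => ?_
  rw [← hx j]
  refine congrArg (fun L : (ι → ℝ) →L[ℝ] ℝ => L x) (Filter.EventuallyEq.fderiv_eq ?_)
  filter_upwards [h.simpleAt.eventually] with c hc
  rw [(hG.hasFDerivAt h.posSpan hc).fderiv]
  simp [Pi.single_apply]

end IsVertexList

lemma fderiv_apply_eq_zero_of_line {F : Type*} [NormedAddCommGroup F] [NormedSpace ℝ F] {g : F → ℝ}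
    {c φ : F} (hg : ∀ t : ℝ, g (c + t • φ) = g c) : fderiv ℝ g c φ = 0 := by
  by_cases hd : DifferentiableAt ℝ g c
  · rw [← hd.lineDeriv_eq_fderiv, lineDeriv]
    simp [hg]
  · rw [fderiv_zero_of_not_differentiableAt hd]; rfl

/-- Translations do not change the volume, so the values of a linear functional at the vertices
lie in the kernel of its Hessian. -/
lemma fderiv_translation [MeasurableSpace E] [BorelSpace E]
    {f : (ι → ℝ) → ℝ} (hf : ∀ c, f c = (volume {x : E | ∀ i, ⟪x, v i⟫ ≤ c i}).toReal)
    (w : E) (c y : ι → ℝ) :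
    fderiv ℝ (fun c => fderiv ℝ f c y) c (fun i => ⟪v i, w⟫) = 0 := by
  refine fderiv_apply_eq_zero_of_line fun t => ?_
  have h1 : (fun c => f (c + t • fun i => ⟪v i, w⟫)) = f := by
    ext c
    rw [hf, hf, ← measure_preimage_add_right volume (t • w) {x : E | ∀ i, ⟪x, v i⟫ ≤ _}]
    congr 2
    ext x
    refine forall_congr' fun i => ?_
    simp only [inner_add_left, real_inner_smul_left, Pi.add_apply, Pi.smul_apply, smul_eq_mul,
      real_inner_comm w (v i)]
    exact add_le_add_iff_right _
  rw [← fderiv_comp_add_right, h1]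

end

/-! ### Permutations of the vertices -/

section

open MeasureTheory Set Filter Topology Asymptotics
open scoped RealInnerProductSpace
set_option linter.unusedSectionVars false

variable {ι : Type*} [Fintype ι] [DecidableEq ι] {E : Type*} [NormedAddCommGroup E]
  [InnerProductSpace ℝ E] [FiniteDimensional ℝ E] {v : ι → E} {P : Set E} {σ : Equiv.Perm ι}

lemma isExtreme_image_iff (T : E ≃ₗᵢ[ℝ] E) {A B : Set E} :
    IsExtreme ℝ (T '' A) (T '' B) ↔ IsExtreme ℝ A B := by
  have hseg : ∀ x y z : E, T z ∈ openSegment ℝ (T x) (T y) ↔ z ∈ openSegment ℝ x y := fun x y z => by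
    have := image_openSegment ℝ (T.toLinearEquiv : E →ₗ[ℝ] E).toAffineMap x y
    change T '' openSegment ℝ x y = openSegment ℝ (T x) (T y) at this
    rw [← this, T.injective.mem_set_image]
  simp only [isExtreme_iff, image_subset_image_iff T.injective, forall_mem_image, hseg,
    T.injective.mem_set_image]

lemma image_segment_isometry (T : E ≃ₗᵢ[ℝ] E) (x y : E) :
    T '' segment ℝ x y = segment ℝ (T x) (T y) :=
  image_segment ℝ (T.toLinearEquiv : E →ₗ[ℝ] E).toAffineMap x y

/-- A symmetry of the volume function under permutation of the right-hand sides makes its Hessian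
invariant. -/
lemma fderiv_fderiv_perm {f : (ι → ℝ) → ℝ} (hf : ∀ c : ι → ℝ, f (c ∘ σ) = f c) (i j : ι) :
    fderiv ℝ (fun c => fderiv ℝ f c (Pi.single (σ j) 1)) (fun _ => 1) (Pi.single (σ i) 1) =
      fderiv ℝ (fun c => fderiv ℝ f c (Pi.single j 1)) (fun _ => 1) (Pi.single i 1) := by
  let S : (ι → ℝ) ≃L[ℝ] (ι → ℝ) := (LinearEquiv.funCongrLeft ℝ ℝ σ).toContinuousLinearEquiv
  have hS : ∀ c, S c = c ∘ σ := fun c => rfl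
  have hSs : ∀ k, S (Pi.single (σ k) 1) = Pi.single k 1 := fun k => by
    ext l
    rw [hS]
    simp [Pi.single_apply]
  have hfS : f ∘ S = f := funext hf
  have h1 : ∀ c y, fderiv ℝ f c y = fderiv ℝ f (S c) (S y) := fun c y => by
    conv_lhs => rw [← hfS, S.comp_right_fderiv]
    rfl
  have h2 : (fun c => fderiv ℝ f c (Pi.single (σ j) 1)) =
      (fun c => fderiv ℝ f c (Pi.single j 1)) ∘ S := by
    ext c
    rw [h1, hSs]
    rfl
  rw [h2, S.comp_right_fderiv]
  change fderiv ℝ _ (S fun _ => 1) (S (Pi.single (σ i) 1)) = _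
  rw [hSs]
  rfl

lemma volume_perm [MeasurableSpace E] [BorelSpace E] (T : E ≃ₗᵢ[ℝ] E)
    (hT : ∀ i, T (v i) = v (σ i)) (c : ι → ℝ) :
    volume {x : E | ∀ i, ⟪x, v i⟫ ≤ (c ∘ σ) i} = volume {x : E | ∀ i, ⟪x, v i⟫ ≤ c i} := by
  rw [← T.measurePreserving.measure_preimage_emb T.toHomeomorph.measurableEmbedding
    {x : E | ∀ i, ⟪x, v i⟫ ≤ c i}]
  congr 1
  ext x
  refine (forall_congr' fun i => ?_).trans σ.forall_congr_right
  rw [← hT i, T.inner_map_map]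
  rfl

namespace IsVertexList

lemma ext_inner (h : IsVertexList v P) {x y : E} (hxy : ∀ i, ⟪v i, x⟫ = ⟪v i, y⟫) : x = y :=
  sub_eq_zero.1 <| h.eq_zero_of_inner_nonpos fun i => by rw [inner_sub_right, hxy, sub_self]

lemma image_eq (h : IsVertexList v P) (T : E ≃ₗᵢ[ℝ] E) (hT : ∀ i, T (v i) = v (σ i)) :
    T '' P = P := by
  have h1 : T '' range v = range v := by
    rw [← range_comp, ← σ.surjective.range_comp v]
    exact congrArg range (funext hT)
  have h2 := (T.toLinearEquiv : E →ₗ[ℝ] E).image_convexHull (range v)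
  change T '' convexHull ℝ (range v) = convexHull ℝ (T '' range v) at h2
  rw [h.eq, h2, h1]

/-- On the line, a permutation of the vertices that preserves absolute values is `± 1`. -/
lemma exists_isometry_of_finrank_eq_one (h : IsVertexList v P) (hE : Module.finrank ℝ E = 1)
    (hn : ∀ i, ‖v (σ i)‖ = ‖v i‖) : ∃ T : E ≃ₗᵢ[ℝ] E, ∀ i, T (v i) = v (σ i) := by
  have : Nontrivial E := Module.nontrivial_of_finrank_pos (R := ℝ) (by omega)
  have hpm : ∀ i, v (σ i) = v i ∨ v (σ i) = -v i := by
    intro i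
    obtain ⟨c, hc⟩ := (finrank_eq_one_iff_of_nonzero' (v i) (h.ne_zero i)).1 hE (v (σ i))
    have h1 := hn i
    rw [← hc, norm_smul] at h1
    have h2 : |c| = 1 := by
      have := norm_ne_zero_iff.2 (h.ne_zero i)
      exact mul_right_cancel₀ this (by simpa using h1)
    rcases eq_or_eq_neg_of_abs_eq h2 with rfl | rfl
    · left; simpa using hc.symm
    · right; simpa using hc.symm
  by_cases hid : ∀ i, v (σ i) = v i
  · exact ⟨LinearIsometryEquiv.refl ℝ E, fun i => (hid i).symm⟩
  push Not at hid
  obtain ⟨i, hi⟩ := hid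
  have hneg : v (σ i) = -v i := (hpm i).resolve_left hi
  refine ⟨LinearIsometryEquiv.neg ℝ, fun k => ?_⟩
  rcases hpm k with hk | hk
  · -- a fixed vertex would be collinear with `v i` and `-v i`
    exfalso
    have h1 : i ≠ k := by rintro rfl; exact hi hk
    have h2 : σ i ≠ k := by
      intro hik
      have := h.inj hk
      rw [← hik] at this
      exact hi (congrArg v (σ.injective this))
    obtain ⟨c, hc⟩ := (finrank_eq_one_iff_of_nonzero' (v i) (h.ne_zero i)).1 hE (v k)
    refine h.not_collinear h1 h2 ((1 - c) / 2) ?_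
    rw [hneg, ← hc]
    module
  · simpa using hk.symm

/-- In dimension at least two, preserving the Hessian makes the permutation linear, and preserving
the metric data at each vertex and its neighbours makes the linear map orthogonal. -/
lemma exists_isometry [MeasurableSpace E] [BorelSpace E] (h : IsVertexList v P)
    (hE : 2 ≤ Module.finrank ℝ E)
    {f : (ι → ℝ) → ℝ} (hf : ∀ c, f c = (volume {x : E | ∀ i, ⟪x, v i⟫ ≤ c i}).toReal)
    (hM : ∀ i j,
      fderiv ℝ (fun c => fderiv ℝ f c (Pi.single (σ j) 1)) (fun _ => 1) (Pi.single (σ i) 1) =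
      fderiv ℝ (fun c => fderiv ℝ f c (Pi.single j 1)) (fun _ => 1) (Pi.single i 1))
    (hn : ∀ i, ‖v (σ i)‖ = ‖v i‖)
    (hadj : ∀ i j, i ≠ j → IsExtreme ℝ P (segment ℝ (v i) (v j)) →
      ⟪v (σ i), v (σ j)⟫ = ⟪v i, v j⟫) : ∃ T : E ≃ₗᵢ[ℝ] E, ∀ i, T (v i) = v (σ i) := by
  have hker : ∀ e : E, ∃ w : E, ∀ i, ⟪v i, w⟫ = ⟪v (σ i), e⟫ := by
    intro e
    refine h.exists_inner_eq hE hf fun j => ?_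
    have h1 := fderiv_translation hf e (fun _ => 1) (Pi.single (σ j) 1)
    set D : ι → (ι → ℝ) →L[ℝ] ℝ :=
      fun j => fderiv ℝ (fun c => fderiv ℝ f c (Pi.single j 1)) (fun _ => 1) with hD
    have hsum : ∀ (L : (ι → ℝ) →L[ℝ] ℝ) (x : ι → ℝ), L x = ∑ i, x i * L (Pi.single i 1) :=
      fun L x => by
        have h2 : ∀ i : ι, (Pi.single i 1 : ι → ℝ) = fun j => if i = j then 1 else 0 :=
          fun i => by ext k; simp [Pi.single_apply, eq_comm]
        simp only [h2]
        exact L.toLinearMap.pi_apply_eq_sum_univ x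
    change D j _ = 0
    change D (σ j) _ = 0 at h1
    rw [hsum, ← Equiv.sum_comp σ] at h1
    rw [hsum, ← h1]
    exact Finset.sum_congr rfl fun i _ => by rw [← hM i j]
  choose S hS using hker
  -- the adjoint of the map to be constructed
  let S' : E →ₗ[ℝ] E :=
    { toFun := S
      map_add' := fun x y => h.ext_inner fun i => by simp only [hS, inner_add_right]
      map_smul' := fun c x => h.ext_inner fun i => by
        simp only [hS, real_inner_smul_right, RingHom.id_apply] }
  let T : E →ₗ[ℝ] E := LinearMap.adjoint S'
  have hTS : ∀ x y, ⟪T x, y⟫ = ⟪x, S y⟫ := fun x y => LinearMap.adjoint_inner_left S' y x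
  have hT : ∀ i, T (v i) = v (σ i) := fun i =>
    ext_inner_right ℝ fun e => by rw [hTS, hS]
  have hST : ∀ i, S (T (v i)) = v i := by
    intro i
    refine sub_eq_zero.1 (h.eq_zero_of_inner_adj i ?_ fun j hij hext => ?_)
    · rw [inner_sub_right, hS, hT, real_inner_self_eq_norm_sq, real_inner_self_eq_norm_sq, hn,
        sub_self]
    · rw [inner_sub_right, hS, hT, real_inner_comm, hadj i j hij hext, real_inner_comm, sub_self]
  have hST' : ∀ x, S (T x) = x := fun x => h.ext_inner fun i => by
    rw [← hTS, real_inner_comm, hTS, hST, real_inner_comm]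
  let T' : E →ₗᵢ[ℝ] E :=
    { T with
      norm_map' := fun x => by
        have : ‖T x‖ ^ 2 = ‖x‖ ^ 2 := by
          rw [← real_inner_self_eq_norm_sq, hTS, hST', real_inner_self_eq_norm_sq]
        exact (sq_eq_sq₀ (norm_nonneg _) (norm_nonneg _)).1 this }
  exact ⟨T'.toLinearIsometryEquiv rfl, hT⟩

end IsVertexList

end

/-- (The product of the Izmestiev coloring and the metric coloring
captures the orthogonal symmetries of `P`.) A permutation `σ` of the vertex indices
preserves the edge relation, the Izmestiev matrix, the norms of the vertices and the
inner products along edges, if and only if `σ` is induced by an orthogonal symmetry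
of `P`. -/
theorem stmt_15 {d n : ℕ}
    (v : Fin n → EuclideanSpace ℝ (Fin d))
    (P : Set (EuclideanSpace ℝ (Fin d)))
    (hP : P = convexHull ℝ (Set.range v))
    (hfull : affineSpan ℝ P = ⊤)
    (hinj : Function.Injective v)
    (hvert : Set.range v = Set.extremePoints ℝ P)
    (h0 : (0 : EuclideanSpace ℝ (Fin d)) ∈ interior P)
    (Adj : Fin n → Fin n → Prop)
    (hAdj : ∀ i j, Adj i j ↔ i ≠ j ∧ IsExtreme ℝ P (segment ℝ (v i) (v j)))
    (f : (Fin n → ℝ) → ℝ)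
    (hf : ∀ c, f c =
      (volume {x : EuclideanSpace ℝ (Fin d) | ∀ i, ⟪x, v i⟫ ≤ c i}).toReal)
    (M : Matrix (Fin n) (Fin n) ℝ)
    (hM : ∀ i j, M i j =
      fderiv ℝ (fun c => fderiv ℝ f c (Pi.single j 1)) (fun _ => 1) (Pi.single i 1))
    (σ : Equiv.Perm (Fin n)) :
    ((∀ i j, Adj i j ↔ Adj (σ i) (σ j)) ∧
     (∀ i j, M (σ i) (σ j) = M i j) ∧
     (∀ i, ‖v (σ i)‖ = ‖v i‖) ∧
     (∀ i j, Adj i j → ⟪v (σ i), v (σ j)⟫ = ⟪v i, v j⟫)) ↔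
    (∃ T : EuclideanSpace ℝ (Fin d) ≃ₗᵢ[ℝ] EuclideanSpace ℝ (Fin d),
      ⇑T '' P = P ∧ ∀ i, T (v i) = v (σ i)) := by
  have h : IsVertexList v P := ⟨hP, hinj, hvert, h0⟩
  constructor
  · rintro ⟨-, hMσ, hn, hin⟩
    suffices hT : ∃ T : EuclideanSpace ℝ (Fin d) ≃ₗᵢ[ℝ] EuclideanSpace ℝ (Fin d),
        ∀ i, T (v i) = v (σ i) by
      obtain ⟨T, hT⟩ := hT
      exact ⟨T, h.image_eq T hT, hT⟩
    match d with
    | 0 => exact ⟨LinearIsometryEquiv.refl ℝ _, fun i => Subsingleton.elim _ _⟩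
    | 1 => exact h.exists_isometry_of_finrank_eq_one (by simp) hn
    | d + 2 =>
      exact h.exists_isometry (by simp) hf (fun i j => by rw [← hM, ← hM, hMσ]) hn
        fun i j hij hext => hin i j ((hAdj i j).2 ⟨hij, hext⟩)
  · rintro ⟨T, hTP, hT⟩
    refine ⟨fun i j => ?_, fun i j => ?_, fun i => ?_, fun i j _ => ?_⟩
    · rw [hAdj, hAdj, σ.injective.ne_iff, ← hT, ← hT, ← image_segment_isometry]
      nth_rw 2 [← hTP]
      rw [isExtreme_image_iff]
    · rw [hM, hM]
      exact fderiv_fderiv_perm (fun c => by rw [hf, hf, volume_perm T hT]) i j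
    · rw [← hT, T.norm_map]
    · rw [← hT, ← hT, T.inner_map_map]
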